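/- Let q be a braiding matrix with connected Dynkin diagram such that B_q is finite dimensional, and let B be a pre-Nichols algebra of q with finite GKdim. Let i,j,k ∈ I_θ be such that q_{ii} = q̃_{ij}^{−1} ∈ G_9', q_{jj} = q̃_{jk}^{−1} = q_{ii}^5, q̃_{ik} = 1 and q_{kk} = q_{ii}^6. Then [[x_{ijk}, x_j]_c, x_k]_c = (1 + q̃_{jk})^{−1} q_{jk} [[x_{ijk}, x_k]_c, x_j]_c in B. -/

import Mathlib

/-
Common framework for formalizing statements from
"Finite GK-dimensional pre-Nichols algebras of (super)modular and unidentified type"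
(Angiono, Campagnolo, Sanmarco).

We work over `ℂ` (an algebraically closed field of characteristic zero).
A braiding matrix is `q : Fin θ → Fin θ → ℂˣ`.  The tensor algebra `T(V)` of the
associated braided vector space of diagonal type is realized as the free algebra
on `Fin θ`.  The braided bialgebra structure on `T(V)` (the braided coproduct,
uniquely determined by the braiding matrix) is packaged in the structure
`BraidedStr`: its fields characterize it uniquely, so quantifying over
`S : BraidedStr θ q` is equivalent to using "the" braided coproduct.

A pre-Nichols algebra of `q` is the quotient `T(V)/I` by an ℕ₀-homogeneous
(two-sided) braided bi-ideal `I` generated in degrees ≥ 2 (`IsPreNicholsIdeal`);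
such an ideal is automatically contained in the defining ideal `Jq` of the
Nichols algebra, which is the largest such ideal.  A statement
"`x = 0` holds in the pre-Nichols algebra `T(V)/I`" is formalized as `x ∈ I`.
-/

open scoped TensorProduct

noncomputable section

namespace PreNicholsPaper

/-- The tensor algebra `T(V)` of the braided vector space of diagonal type of rank `θ`. -/
abbrev TV (θ : ℕ) := FreeAlgebra ℂ (Fin θ)

/-- The generator `x_i` of `T(V)`. -/
def gen (θ : ℕ) (i : Fin θ) : TV θ := FreeAlgebra.ι ℂ i

/-- The monomial `x_{i_1} ⋯ x_{i_n}` associated to a word. -/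
def wordElem (θ : ℕ) (w : List (Fin θ)) : TV θ := (w.map (gen θ)).prod

/-- The multidegree in `ℕ₀^θ` of a word. -/
def degW (θ : ℕ) (w : List (Fin θ)) : Fin θ → ℕ := fun i => w.count i

/-- `α_i`, the `i`-th canonical basis vector of `ℕ₀^θ`. -/
def δ (θ : ℕ) (i : Fin θ) : Fin θ → ℕ := fun k => if k = i then 1 else 0

/-- The bilinear form `ℕ₀^θ × ℕ₀^θ → ℂˣ` attached to the braiding matrix,
`q(α_i, α_j) = q_{ij}`, evaluated in `ℂ`. -/
def qf {θ : ℕ} (q : Fin θ → Fin θ → ℂˣ) (a b : Fin θ → ℕ) : ℂ :=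
  ∏ i : Fin θ, ∏ j : Fin θ, (q i j : ℂ) ^ (a i * b j)

/-- `q̃_{ij} = q_{ij} q_{ji}`. -/
def qtil {θ : ℕ} (q : Fin θ → Fin θ → ℂˣ) (i j : Fin θ) : ℂ := (q i j : ℂ) * (q j i : ℂ)

/-- The braided commutator `[u,v]_c = uv - q(a,b) vu` of elements `u, v`
which are homogeneous of multidegrees `a`, `b` respectively. -/
def brk {θ : ℕ} (q : Fin θ → Fin θ → ℂˣ) (a b : Fin θ → ℕ) (u v : TV θ) : TV θ :=
  u * v - qf q a b • (v * u)

/-- `(ad_c x_i) y = x_i y - q(α_i, b) y x_i` for `y` homogeneous of multidegree `b`. -/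
def ad1 {θ : ℕ} (q : Fin θ → Fin θ → ℂˣ) (i : Fin θ) (b : Fin θ → ℕ) (y : TV θ) : TV θ :=
  brk q (δ θ i) b (gen θ i) y

/-- The iterated braided adjoint `x_{i_1 i_2 ⋯ i_k} = (ad_c x_{i_1}) x_{i_2 ⋯ i_k}`. -/
def xw {θ : ℕ} (q : Fin θ → Fin θ → ℂˣ) : List (Fin θ) → TV θ
  | [] => 1
  | [i] => gen θ i
  | i :: w => ad1 q i (degW θ w) (xw q w)

/-- `(ad_c x_i)^m x_j`. -/
def adpow {θ : ℕ} (q : Fin θ → Fin θ → ℂˣ) (i j : Fin θ) : ℕ → TV θ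
  | 0 => gen θ j
  | m + 1 => ad1 q i (fun k => m * δ θ i k + δ θ j k) (adpow q i j m)

/-- The homogeneous component of total degree `n` of `T(V)`. -/
def homogTot (θ : ℕ) (n : ℕ) : Submodule ℂ (TV θ) :=
  Submodule.span ℂ {x | ∃ w : List (Fin θ), w.length = n ∧ x = wordElem θ w}

/-- The homogeneous component of multidegree `d ∈ ℕ₀^θ` of `T(V)`. -/
def homogD (θ : ℕ) (d : Fin θ → ℕ) : Submodule ℂ (TV θ) :=
  Submodule.span ℂ {x | ∃ w : List (Fin θ), degW θ w = d ∧ x = wordElem θ w}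

/-- The braided bialgebra structure on `T(V)` determined by the braiding matrix `q`:
the braided coproduct `Δ` together with the multiplication `mulB` of the braided
tensor product `T(V) ⊗ T(V)`.  These axioms determine `Δ` and `mulB` uniquely. -/
structure BraidedStr (θ : ℕ) (q : Fin θ → Fin θ → ℂˣ) where
  Δ : TV θ →ₗ[ℂ] TensorProduct ℂ (TV θ) (TV θ)
  mulB : TensorProduct ℂ (TV θ) (TV θ) →ₗ[ℂ]
    TensorProduct ℂ (TV θ) (TV θ) →ₗ[ℂ] TensorProduct ℂ (TV θ) (TV θ)
  mulB_spec : ∀ (a d : TV θ) (wb wc : List (Fin θ)),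
    mulB (a ⊗ₜ[ℂ] wordElem θ wb) (wordElem θ wc ⊗ₜ[ℂ] d)
      = qf q (degW θ wb) (degW θ wc) • ((a * wordElem θ wc) ⊗ₜ[ℂ] (wordElem θ wb * d))
  Δ_one : Δ 1 = 1 ⊗ₜ[ℂ] 1
  Δ_gen : ∀ i, Δ (gen θ i) = gen θ i ⊗ₜ[ℂ] 1 + 1 ⊗ₜ[ℂ] gen θ i
  Δ_mul : ∀ u v : TV θ, Δ (u * v) = mulB (Δ u) (Δ v)

variable {θ : ℕ} {q : Fin θ → Fin θ → ℂˣ}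

/-- `x` is a primitive element. -/
def IsPrimitiveIn (S : BraidedStr θ q) (x : TV θ) : Prop :=
  S.Δ x = x ⊗ₜ[ℂ] (1 : TV θ) + (1 : TV θ) ⊗ₜ[ℂ] x

/-- The submodule `I ⊗ T(V) + T(V) ⊗ J` of `T(V) ⊗ T(V)`. -/
def mixedPair (I J : Submodule ℂ (TV θ)) : Submodule ℂ (TensorProduct ℂ (TV θ) (TV θ)) :=
  Submodule.span ℂ
    ({x | ∃ a b : TV θ, a ∈ I ∧ x = a ⊗ₜ[ℂ] b} ∪ {x | ∃ a b : TV θ, b ∈ J ∧ x = a ⊗ₜ[ℂ] b})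

/-- The submodule `I ⊗ T(V) + T(V) ⊗ I` of `T(V) ⊗ T(V)`. -/
def mixedSub (I : Submodule ℂ (TV θ)) : Submodule ℂ (TensorProduct ℂ (TV θ) (TV θ)) :=
  mixedPair I I

/-- `I` is the defining ideal of a pre-Nichols algebra of `q`：an ℕ₀-homogeneous
two-sided (bi-)ideal of `T(V)` generated in degrees `≥ 2` which is also a coideal.
Such an ideal is automatically contained in the defining ideal `Jq` of the Nichols
algebra, and the pre-Nichols algebra is the quotient `T(V)/I`. -/
structure IsPreNicholsIdeal (S : BraidedStr θ q) (I : Submodule ℂ (TV θ)) : Prop where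
  mul_left : ∀ a x : TV θ, x ∈ I → a * x ∈ I
  mul_right : ∀ a x : TV θ, x ∈ I → x * a ∈ I
  homog_ge2 : I = Submodule.span ℂ {x | x ∈ I ∧ ∃ n, 2 ≤ n ∧ x ∈ homogTot θ n}
  coideal : ∀ x ∈ I, S.Δ x ∈ mixedSub I

/-- The defining ideal `J_q` of the Nichols algebra `B_q = T(V)/J_q`:
the maximal homogeneous braided Hopf ideal generated in degrees `≥ 2`. -/
def Jq (S : BraidedStr θ q) : Submodule ℂ (TV θ) := sSup {I | IsPreNicholsIdeal S I}

/-- The standard filtration of `T(V)`: span of words of length `≤ n`. -/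
def Wfil (θ : ℕ) (n : ℕ) : Submodule ℂ (TV θ) :=
  Submodule.span ℂ {x | ∃ w : List (Fin θ), w.length ≤ n ∧ x = wordElem θ w}

/-- The quotient algebra `T(V)/I` has finite Gelfand–Kirillov dimension, i.e.
the standard filtration of the (finitely generated) quotient has polynomial growth. -/
def FinGK (I : Submodule ℂ (TV θ)) : Prop :=
  ∃ C d : ℕ, ∀ n : ℕ, Module.finrank ℂ ((Wfil θ n).map I.mkQ) ≤ C * (n + 1) ^ d

/-- The Gelfand–Kirillov dimension of the quotient algebra `T(V)/I`. -/
def GKdim (I : Submodule ℂ (TV θ)) : ℝ :=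
  Filter.limsup
    (fun n : ℕ => Real.log (Module.finrank ℂ ((Wfil θ n).map I.mkQ)) / Real.log n)
    Filter.atTop

/-- `I` defines an eminent pre-Nichols algebra: it is a finite-GKdim pre-Nichols
algebra, and every finite-GKdim pre-Nichols algebra of `q` is a quotient of it. -/
def IsEminent (S : BraidedStr θ q) (I : Submodule ℂ (TV θ)) : Prop :=
  IsPreNicholsIdeal S I ∧ FinGK I ∧
    ∀ I' : Submodule ℂ (TV θ), IsPreNicholsIdeal S I' → FinGK I' → I ≤ I'

/-- The Dynkin diagram of the braiding matrix `q`: vertices `Fin θ`, an edge between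
`i ≠ j` iff `q̃_{ij} ≠ 1`. -/
def dynkin {θ : ℕ} (q : Fin θ → Fin θ → ℂˣ) : SimpleGraph (Fin θ) :=
  SimpleGraph.fromRel (fun i j => qtil q i j ≠ 1)

/-- The quantum number `(m)_t = 1 + t + ⋯ + t^{m-1}`. -/
def qnum (t : ℂ) (m : ℕ) : ℂ := ∑ k ∈ Finset.range m, t ^ k

/-- The set of `n ∈ ℕ₀` such that `(n+1)_{q_{ii}} (1 - q_{ii}^n q̃_{ij}) = 0`,
i.e. such that `(ad_c x_i)^{n+1} x_j = 0` in the Nichols algebra.  The entry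
`c_{ij}` of the generalized Cartan matrix is `-(min of this set)`. -/
def cSet {θ : ℕ} (q : Fin θ → Fin θ → ℂˣ) (i j : Fin θ) : Set ℕ :=
  {n | qnum (q i i : ℂ) (n + 1) * (1 - (q i i : ℂ) ^ n * qtil q i j) = 0}

/-- The generalized Cartan matrix of `q`. -/
def cij {θ : ℕ} (q : Fin θ → Fin θ → ℂˣ) (i j : Fin θ) : ℤ :=
  if i = j then 2 else -(Int.ofNat (sInf (cSet q i j)))

/-- All entries `c_{ij}` are defined at the vertex `i`. -/
def reflectable {θ : ℕ} (q : Fin θ → Fin θ → ℂˣ) (i : Fin θ) : Prop :=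
  ∀ j, j ≠ i → (cSet q i j).Nonempty

/-- The `i`-th reflection of the braiding matrix:
`(r_i q)_{jk} = q(s_i α_j, s_i α_k)` where `s_i α_j = α_j - c_{ij} α_i`. -/
def reflectMat {θ : ℕ} (q : Fin θ → Fin θ → ℂˣ) (i : Fin θ) : Fin θ → Fin θ → ℂˣ :=
  fun j k =>
    q j k * q j i ^ (-(cij q i k)) * q i k ^ (-(cij q i j)) * q i i ^ (cij q i j * cij q i k)

/-- The reflection `s_i` acting on `ℤ^θ`. -/
def sRefl {θ : ℕ} (q : Fin θ → Fin θ → ℂˣ) (i : Fin θ) (β : Fin θ → ℤ) : Fin θ → ℤ :=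
  fun k => β k - (if k = i then ∑ j, cij q i j * β j else 0)

/-- The (real) roots of `q`, together with the base points of the Weyl groupoid at
which they live: pairs `(q', β)` obtained from a simple root of `q` by iterated
reflections. -/
inductive ReachRoot {θ : ℕ} (q₀ : Fin θ → Fin θ → ℂˣ) :
    (Fin θ → Fin θ → ℂˣ) → (Fin θ → ℤ) → Prop
  | simple (j : Fin θ) : ReachRoot q₀ q₀ (fun k => if k = j then 1 else 0)
  | reflect {q' : Fin θ → Fin θ → ℂˣ} {β : Fin θ → ℤ} (i : Fin θ) :
      ReachRoot q₀ q' β → ReachRoot q₀ (reflectMat q' i) (sRefl q' i β)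

/-- `q` has a finite (generalized) root system: all reflections are defined at every
point of the Weyl groupoid, and the set of roots so obtained is finite. -/
def FiniteRootSystem {θ : ℕ} (q : Fin θ → Fin θ → ℂˣ) : Prop :=
  (∀ q' i, (∃ β, ReachRoot q q' β) → reflectable q' i) ∧
    Set.Finite {β : Fin θ → ℤ | ∃ q', ReachRoot q q' β}

/-- Conjecture (Andruskiewitsch–Angiono–Heckenberger): the root system of a Nichols
algebra of diagonal type with finite Gelfand–Kirillov dimension is finite. -/
def AAH : Prop :=
  ∀ (θ : ℕ) (q : Fin θ → Fin θ → ℂˣ) (S : BraidedStr θ q), FinGK (Jq S) → FiniteRootSystem q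

/-- The two-sided ideal of `T(V)` generated by a set. -/
def idealGen (θ : ℕ) (s : Set (TV θ)) : Submodule ℂ (TV θ) :=
  Submodule.span ℂ {x | ∃ g ∈ s, ∃ a b : TV θ, x = a * g * b}

end PreNicholsPaper

namespace PreNicholsPaper

/-
The ideal `I` is stable under the twists by the braiding, so coproducts can be computed modulo `I`.
If a homogeneous element of degree at least two is primitive modulo `I` and does not lie in `I`,
then it spans together with some `x_a` a braided vector space of rank two whose Nichols algebra has
finite GK dimension; by the AAH conjecture its root system is finite. This is impossible when its
Dynkin diagram belongs to a certain set of ten diagrams over the ninth roots of unity: the set is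
stable under reflections and all Cartan entries are at most `-2`, so reflecting alternately at the
two vertices produces roots with unbounded coefficients. The argument applies to
`[x_i, x_k]_c`, to `[[x_k, x_j]_c, x_j]_c`, and finally to the difference of the two sides of the
relation, which is primitive modulo the first two elements.
-/

section BilinearForm

variable {θ : ℕ} (q : Fin θ → Fin θ → ℂˣ)

lemma qf_add_left (a a' b : Fin θ → ℕ) : qf q (a + a') b = qf q a b * qf q a' b := by
  simp [qf, add_mul, pow_add, Finset.prod_mul_distrib]

lemma qf_add_right (a b b' : Fin θ → ℕ) : qf q a (b + b') = qf q a b * qf q a b' := by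
  simp [qf, mul_add, pow_add, Finset.prod_mul_distrib]

@[simp]
lemma qf_zero_left (b : Fin θ → ℕ) : qf q 0 b = 1 := by simp [qf]

@[simp]
lemma qf_zero_right (a : Fin θ → ℕ) : qf q a 0 = 1 := by simp [qf]

lemma qf_nsmul_left (n : ℕ) (a b : Fin θ → ℕ) : qf q (n • a) b = qf q a b ^ n := by
  induction n with
  | zero => simp
  | succ n ih => rw [succ_nsmul, qf_add_left, ih, pow_succ]

lemma qf_nsmul_right (n : ℕ) (a b : Fin θ → ℕ) : qf q a (n • b) = qf q a b ^ n := by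
  induction n with
  | zero => simp
  | succ n ih => rw [succ_nsmul, qf_add_right, ih, pow_succ]

@[simp]
lemma qf_δ_δ (i j : Fin θ) : qf q (δ θ i) (δ θ j) = q i j := by
  unfold qf
  rw [Finset.prod_eq_single i, Finset.prod_eq_single j]
  · simp [δ]
  · intro b _ hb; simp [δ, hb]
  · simp
  · intro b _ hb; simp [δ, hb]
  · simp

lemma qf_ne_zero (a b : Fin θ → ℕ) : qf q a b ≠ 0 := by
  simp [qf, Finset.prod_ne_zero_iff]

/-- The symmetrized bicharacter `q(d, e) q(e, d)`, extending `qtil` to all degrees. -/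
def qsym (d e : Fin θ → ℕ) : ℂ := qf q d e * qf q e d

lemma qsym_add_left (d d' e : Fin θ → ℕ) : qsym q (d + d') e = qsym q d e * qsym q d' e := by
  rw [qsym, qsym, qsym, qf_add_left, qf_add_right, mul_mul_mul_comm]

lemma qsym_δ_δ (i j : Fin θ) : qsym q (δ θ i) (δ θ j) = qtil q i j := by
  rw [qsym, qf_δ_δ, qf_δ_δ, qtil]

end BilinearForm

section Words

variable {θ : ℕ}

@[simp]
lemma wordElem_nil : wordElem θ [] = 1 := rfl

@[simp]
lemma wordElem_cons (i : Fin θ) (w : List (Fin θ)) :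
    wordElem θ (i :: w) = gen θ i * wordElem θ w := by simp [wordElem]

lemma wordElem_append (v w : List (Fin θ)) :
    wordElem θ (v ++ w) = wordElem θ v * wordElem θ w := by simp [wordElem]

lemma wordElem_singleton (i : Fin θ) : wordElem θ [i] = gen θ i := by simp

@[simp]
lemma degW_nil : degW θ [] = 0 := by ext; simp [degW]

lemma degW_append (v w : List (Fin θ)) : degW θ (v ++ w) = degW θ v + degW θ w := by
  ext; simp [degW]

@[simp]
lemma degW_singleton (i : Fin θ) : degW θ [i] = δ θ i := by
  ext k
  by_cases h : k = i
  · simp [degW, δ, h]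
  · simp [degW, δ, h, List.count_eq_zero]

lemma degW_cons (i : Fin θ) (w : List (Fin θ)) : degW θ (i :: w) = δ θ i + degW θ w := by
  rw [← degW_singleton, ← degW_append, List.singleton_append]

lemma degW_perm {v w : List (Fin θ)} (h : v.Perm w) : degW θ v = degW θ w := by
  ext k
  exact h.count_eq k

lemma sum_degW (w : List (Fin θ)) : ∑ k, degW θ w k = w.length := by
  induction w with
  | nil => simp
  | cons i w ih => simp [degW_cons, Finset.sum_add_distrib, ih, δ, add_comm]

/-- The words, as a basis of the tensor algebra. -/
def wordBasis (θ : ℕ) : Module.Basis (List (Fin θ)) ℂ (TV θ) :=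
  (FreeAlgebra.basisFreeMonoid ℂ (Fin θ)).reindex FreeMonoid.toList

@[simp]
lemma wordBasis_apply (w : List (Fin θ)) : wordBasis θ w = wordElem θ w := by
  simp only [wordBasis, Module.Basis.reindex_apply, FreeAlgebra.basisFreeMonoid,
    Module.Basis.map_apply, Finsupp.coe_basisSingleOne]
  change FreeAlgebra.equivMonoidAlgebraFreeMonoid.symm
    (MonoidAlgebra.single (FreeMonoid.ofList w) (1 : ℂ)) = _
  simp only [FreeAlgebra.equivMonoidAlgebraFreeMonoid, AlgEquiv.ofAlgHom_symm,
    AlgEquiv.ofAlgHom_apply, MonoidAlgebra.lift_single, one_smul, FreeMonoid.lift_apply]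
  rfl

section LinearExtension

variable {M : Type*} [AddCommGroup M] [Module ℂ M]

lemma ext_words {f g : TV θ →ₗ[ℂ] M} (h : ∀ w, f (wordElem θ w) = g (wordElem θ w)) : f = g :=
  (wordBasis θ).ext fun w => by simpa using h w

lemma ext_tmul_words {f g : TV θ ⊗[ℂ] TV θ →ₗ[ℂ] M}
    (h : ∀ v w, f (wordElem θ v ⊗ₜ wordElem θ w) = g (wordElem θ v ⊗ₜ wordElem θ w)) : f = g :=
  ((wordBasis θ).tensorProduct (wordBasis θ)).ext fun ⟨v, w⟩ => by simpa using h v w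

lemma map_mem_of_words {P : Submodule ℂ M} {f : TV θ →ₗ[ℂ] M}
    (h : ∀ w, f (wordElem θ w) ∈ P) (x : TV θ) : f x ∈ P := by
  have hf : P.mkQ ∘ₗ f = 0 := ext_words fun w => by simpa using h w
  simpa using LinearMap.congr_fun hf x

lemma map_mem_of_tmul_words {P : Submodule ℂ M} {f : TV θ ⊗[ℂ] TV θ →ₗ[ℂ] M}
    (h : ∀ v w, f (wordElem θ v ⊗ₜ wordElem θ w) ∈ P) (x : TV θ ⊗[ℂ] TV θ) : f x ∈ P := by
  have hf : P.mkQ ∘ₗ f = 0 := ext_tmul_words fun v w => by simpa using h v w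
  simpa using LinearMap.congr_fun hf x

lemma eq_of_mem_homogD {f g : TV θ →ₗ[ℂ] M} {d : Fin θ → ℕ} {x : TV θ} (hx : x ∈ homogD θ d)
    (h : ∀ w, degW θ w = d → f (wordElem θ w) = g (wordElem θ w)) : f x = g x :=
  LinearMap.eqOn_span (by rintro _ ⟨w, hw, rfl⟩; exact h w hw) hx

end LinearExtension

/-- The coefficient of a word; the empty word gives the counit of `T(V)`. -/
def coeffW (w : List (Fin θ)) : TV θ →ₗ[ℂ] ℂ := (wordBasis θ).coord w

lemma coeffW_word (v w : List (Fin θ)) :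
    coeffW v (wordElem θ w) = if w = v then 1 else 0 := by
  rw [coeffW, ← wordBasis_apply, Module.Basis.coord_apply, Module.Basis.repr_self,
    Finsupp.single_apply]

@[simp]
lemma coeffW_nil_one : coeffW [] (1 : TV θ) = 1 := by
  rw [← wordElem_nil, coeffW_word, if_pos rfl]

lemma coeffW_nil_mul (x y : TV θ) : coeffW [] (x * y) = coeffW [] x * coeffW [] y := by
  have h : (LinearMap.mul ℂ (TV θ)).compr₂ (coeffW [])
      = (LinearMap.mul ℂ ℂ).compl₁₂ (coeffW []) (coeffW []) :=
    ext_words fun v => ext_words fun w => by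
      cases v <;> simp [← wordElem_append, coeffW_word, -wordElem_cons]
  exact LinearMap.congr_fun₂ h x y

@[simp]
lemma coeffW_nil_gen (i : Fin θ) : coeffW [] (gen θ i) = 0 := by
  rw [← wordElem_singleton, coeffW_word, if_neg (by simp)]

lemma coeffW_singleton_gen_mul (i : Fin θ) (x : TV θ) :
    coeffW [i] (gen θ i * x) = coeffW [] x := by
  have h : coeffW [i] ∘ₗ LinearMap.mulLeft ℂ (gen θ i) = coeffW [] := ext_words fun w => by
    simp [← wordElem_cons, coeffW_word]
  exact LinearMap.congr_fun h x

lemma coeffW_singleton_mul_gen (i : Fin θ) (x : TV θ) :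
    coeffW [i] (x * gen θ i) = coeffW [] x := by
  have h : coeffW [i] ∘ₗ LinearMap.mulRight ℂ (gen θ i) = coeffW [] := ext_words fun w => by
    cases w <;> simp [← wordElem_singleton i, ← wordElem_append, coeffW_word, -wordElem_cons]
  exact LinearMap.congr_fun h x

lemma one_mem_homogD : (1 : TV θ) ∈ homogD θ 0 :=
  Submodule.subset_span ⟨[], degW_nil, rfl⟩

lemma gen_mem_homogD (i : Fin θ) : gen θ i ∈ homogD θ (δ θ i) :=
  Submodule.subset_span ⟨[i], degW_singleton i, (wordElem_singleton i).symm⟩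

lemma word_mem_homogD (w : List (Fin θ)) : wordElem θ w ∈ homogD θ (degW θ w) :=
  Submodule.subset_span ⟨w, rfl, rfl⟩

lemma homogD_mul {d e : Fin θ → ℕ} {x y : TV θ} (hx : x ∈ homogD θ d) (hy : y ∈ homogD θ e) :
    x * y ∈ homogD θ (d + e) := by
  have h : homogD θ d * homogD θ e ≤ homogD θ (d + e) := by
    rw [homogD, homogD, Submodule.span_mul_span, Submodule.span_le]
    rintro _ ⟨_, ⟨v, rfl, rfl⟩, _, ⟨w, rfl, rfl⟩, rfl⟩
    exact Submodule.subset_span ⟨v ++ w, degW_append v w, (wordElem_append v w).symm⟩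
  exact h (Submodule.mul_mem_mul hx hy)

lemma brk_mem_homogD (q : Fin θ → Fin θ → ℂˣ) {d e : Fin θ → ℕ} {x y : TV θ}
    (hx : x ∈ homogD θ d) (hy : y ∈ homogD θ e) : brk q d e x y ∈ homogD θ (d + e) :=
  sub_mem (homogD_mul hx hy) (Submodule.smul_mem _ _ (add_comm d e ▸ homogD_mul hy hx))

lemma homogD_le_homogTot (d : Fin θ → ℕ) : homogD θ d ≤ homogTot θ (∑ k, d k) := by
  refine Submodule.span_mono ?_
  rintro _ ⟨w, rfl, rfl⟩
  exact ⟨w, (sum_degW w).symm, rfl⟩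

lemma coeffW_of_mem_homogTot {n : ℕ} {x : TV θ} (hx : x ∈ homogTot θ n) {v : List (Fin θ)}
    (hv : v.length ≠ n) : coeffW v x = 0 := by
  refine LinearMap.eqOn_span (g := 0) ?_ hx
  rintro _ ⟨w, hw, rfl⟩
  rw [coeffW_word, if_neg (by rintro rfl; exact hv hw), LinearMap.zero_apply]

end Words

section DegreeScaling

variable {θ : ℕ}

/-- The endomorphism of `T(V)` acting on the component of multidegree `d` by the scalar `f d`.
It covers both the twists by `q(β, -)` and `q(-, β)` and the projections `projTot`. -/
def degScale (f : (Fin θ → ℕ) → ℂ) : TV θ →ₗ[ℂ] TV θ :=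
  (wordBasis θ).constr ℂ fun w => f (degW θ w) • wordElem θ w

lemma degScale_word (f : (Fin θ → ℕ) → ℂ) (w : List (Fin θ)) :
    degScale f (wordElem θ w) = f (degW θ w) • wordElem θ w := by
  rw [← wordBasis_apply, degScale, Module.Basis.constr_basis, wordBasis_apply]

lemma degScale_of_mem (f : (Fin θ → ℕ) → ℂ) {d : Fin θ → ℕ} {x : TV θ} (hx : x ∈ homogD θ d) :
    degScale f x = f d • x :=
  eq_of_mem_homogD (g := f d • LinearMap.id) hx fun w hw => by simp [degScale_word, hw]

lemma degScale_mul (f g : (Fin θ → ℕ) → ℂ) (x : TV θ) :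
    degScale (fun d => f d * g d) x = degScale f (degScale g x) := by
  have h : degScale (fun d => f d * g d) = degScale f ∘ₗ degScale g := ext_words fun w => by
    simp [degScale_word, smul_smul, mul_comm]
  exact LinearMap.congr_fun h x

lemma degScale_one (x : TV θ) : degScale (fun _ => 1) x = x := by
  have h : degScale (fun _ : Fin θ → ℕ => 1) = LinearMap.id := ext_words fun w => by
    simp [degScale_word]
  exact LinearMap.congr_fun h x

lemma coeffW_degScale (f : (Fin θ → ℕ) → ℂ) (w : List (Fin θ)) (x : TV θ) :
    coeffW w (degScale f x) = f (degW θ w) * coeffW w x := by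
  have h : coeffW w ∘ₗ degScale f = f (degW θ w) • coeffW w := ext_words fun v => by
    by_cases hv : v = w <;> simp [degScale_word, coeffW_word, hv]
  exact LinearMap.congr_fun h x

/-- The projection of `T(V)` onto its component of total degree `n`. -/
def projTot (n : ℕ) : TV θ →ₗ[ℂ] TV θ := degScale fun d => if ∑ k, d k = n then 1 else 0

lemma projTot_word (n : ℕ) (w : List (Fin θ)) :
    projTot n (wordElem θ w) = if w.length = n then wordElem θ w else 0 := by
  rw [projTot, degScale_word, sum_degW, ite_smul, one_smul, zero_smul]

lemma projTot_of_mem {n : ℕ} (m : ℕ) {x : TV θ} (hx : x ∈ homogTot θ n) :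
    projTot m x = if n = m then x else 0 := by
  refine LinearMap.eqOn_span (g := if n = m then LinearMap.id else 0) ?_ hx |>.trans ?_
  · rintro _ ⟨w, rfl, rfl⟩
    rw [projTot_word]
    split_ifs <;> rfl
  · split_ifs <;> rfl

lemma projTot_mem (n : ℕ) (x : TV θ) : projTot n x ∈ homogTot θ n := by
  refine map_mem_of_words (fun w => ?_) x
  rw [projTot_word]
  split_ifs with h
  exacts [Submodule.subset_span ⟨w, h, rfl⟩, zero_mem _]

lemma coeffW_projTot (n : ℕ) (w : List (Fin θ)) (x : TV θ) :
    coeffW w (projTot n x) = if w.length = n then coeffW w x else 0 := by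
  rw [projTot, coeffW_degScale, sum_degW, ite_mul, one_mul, zero_mul]

end DegreeScaling

section BraidedMultiplication

variable {θ : ℕ} {q : Fin θ → Fin θ → ℂˣ}

/-- The multiplication of the braided tensor product `T(V) ⊗ T(V)`. -/
def braidedMul (q : Fin θ → Fin θ → ℂˣ) :
    TV θ ⊗[ℂ] TV θ →ₗ[ℂ] TV θ ⊗[ℂ] TV θ →ₗ[ℂ] TV θ ⊗[ℂ] TV θ :=
  ((wordBasis θ).tensorProduct (wordBasis θ)).constr ℂ fun x =>
    ((wordBasis θ).tensorProduct (wordBasis θ)).constr ℂ fun y =>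
      qf q (degW θ x.2) (degW θ y.1) • (wordElem θ (x.1 ++ y.1) ⊗ₜ wordElem θ (x.2 ++ y.2))

lemma braidedMul_word (a b c d : List (Fin θ)) :
    braidedMul q (wordElem θ a ⊗ₜ wordElem θ b) (wordElem θ c ⊗ₜ wordElem θ d)
      = qf q (degW θ b) (degW θ c) • (wordElem θ (a ++ c) ⊗ₜ wordElem θ (b ++ d)) := by
  have h (v w : List (Fin θ)) : wordElem θ v ⊗ₜ[ℂ] wordElem θ w
      = (wordBasis θ).tensorProduct (wordBasis θ) (v, w) := by simp
  rw [h a b, h c d, braidedMul, Module.Basis.constr_basis, Module.Basis.constr_basis]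

lemma braidedMul_assoc (L M N : TV θ ⊗[ℂ] TV θ) :
    braidedMul q (braidedMul q L M) N = braidedMul q L (braidedMul q M N) := by
  have h : (braidedMul q).compr₂ (braidedMul q)
      = (LinearMap.llcomp ℂ _ _ _).compl₁₂ (braidedMul q) (braidedMul q) := by
    refine ext_tmul_words fun a b => ext_tmul_words fun c d => ext_tmul_words fun e f => ?_
    simp only [LinearMap.compr₂_apply, LinearMap.compl₁₂_apply, LinearMap.llcomp_apply,
      braidedMul_word, map_smul, LinearMap.smul_apply, smul_smul, degW_append, qf_add_left,
      qf_add_right, List.append_assoc]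
    congr 1
    ring
  exact LinearMap.congr_fun (LinearMap.congr_fun₂ h L M) N

lemma one_braidedMul (M : TV θ ⊗[ℂ] TV θ) : braidedMul q (1 ⊗ₜ 1) M = M := by
  have h : braidedMul q (1 ⊗ₜ 1) = LinearMap.id := ext_tmul_words fun a b => by
    simpa using braidedMul_word (q := q) [] [] a b
  exact LinearMap.congr_fun h M

lemma braidedMul_one (M : TV θ ⊗[ℂ] TV θ) : braidedMul q M (1 ⊗ₜ 1) = M := by
  have h : (braidedMul q).flip (1 ⊗ₜ 1) = LinearMap.id := ext_tmul_words fun a b => by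
    simpa using braidedMul_word (q := q) a b [] []
  exact LinearMap.congr_fun h M

lemma braidedMul_tmul_word_word_tmul (a d : TV θ) (v w : List (Fin θ)) :
    braidedMul q (a ⊗ₜ wordElem θ v) (wordElem θ w ⊗ₜ d)
      = qf q (degW θ v) (degW θ w) • ((a * wordElem θ w) ⊗ₜ (wordElem θ v * d)) := by
  have h : (braidedMul q).compl₁₂ ((TensorProduct.mk ℂ (TV θ) (TV θ)).flip (wordElem θ v))
        (TensorProduct.mk ℂ (TV θ) (TV θ) (wordElem θ w))
      = qf q (degW θ v) (degW θ w) • (TensorProduct.mk ℂ (TV θ) (TV θ)).compl₁₂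
          (LinearMap.mulRight ℂ (wordElem θ w)) (LinearMap.mulLeft ℂ (wordElem θ v)) :=
    ext_words fun a => ext_words fun d => by
      simp [braidedMul_word, wordElem_append]
  exact LinearMap.congr_fun₂ h a d

/-- The braided coproduct of a word. -/
def comulWord (q : Fin θ → Fin θ → ℂˣ) : List (Fin θ) → TV θ ⊗[ℂ] TV θ
  | [] => 1 ⊗ₜ 1
  | i :: w => braidedMul q (gen θ i ⊗ₜ 1 + 1 ⊗ₜ gen θ i) (comulWord q w)

lemma comulWord_append (v w : List (Fin θ)) :
    comulWord q (v ++ w) = braidedMul q (comulWord q v) (comulWord q w) := by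
  induction v with
  | nil => exact (one_braidedMul _).symm
  | cons i v ih => simp only [List.cons_append, comulWord, ih, braidedMul_assoc]

lemma constr_comulWord (w : List (Fin θ)) :
    (wordBasis θ).constr ℂ (comulWord q) (wordElem θ w) = comulWord q w := by
  rw [← wordBasis_apply, Module.Basis.constr_basis]

/-- The braided bialgebra structure of `T(V)`. -/
def braidedStr (q : Fin θ → Fin θ → ℂˣ) : BraidedStr θ q where
  Δ := (wordBasis θ).constr ℂ (comulWord q)
  mulB := braidedMul q
  mulB_spec := braidedMul_tmul_word_word_tmul
  Δ_one := constr_comulWord []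
  Δ_gen i := by
    rw [← wordElem_singleton, constr_comulWord, comulWord, comulWord, braidedMul_one,
      wordElem_singleton]
  Δ_mul u v := by
    have h : (LinearMap.mul ℂ (TV θ)).compr₂ ((wordBasis θ).constr ℂ (comulWord q))
        = (braidedMul q).compl₁₂ ((wordBasis θ).constr ℂ (comulWord q))
            ((wordBasis θ).constr ℂ (comulWord q)) :=
      ext_words fun v => ext_words fun w => by
        simp only [LinearMap.compr₂_apply, LinearMap.mul_apply', LinearMap.compl₁₂_apply,
          ← wordElem_append, constr_comulWord, comulWord_append]
    exact LinearMap.congr_fun₂ h u v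

end BraidedMultiplication

namespace BraidedStr

variable {θ : ℕ} {q : Fin θ → Fin θ → ℂˣ}

lemma mulB_eq_left_twist (S : BraidedStr θ q) (a c d : TV θ) {b : TV θ} {β : Fin θ → ℕ}
    (hb : b ∈ homogD θ β) :
    S.mulB (a ⊗ₜ b) (c ⊗ₜ d) = (a * degScale (qf q β) c) ⊗ₜ (b * d) := by
  have hword (w : List (Fin θ)) : S.mulB (a ⊗ₜ wordElem θ w) (c ⊗ₜ d)
      = (a * degScale (qf q (degW θ w)) c) ⊗ₜ (wordElem θ w * d) := by
    have h : S.mulB (a ⊗ₜ wordElem θ w) ∘ₗ (TensorProduct.mk ℂ _ _).flip d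
        = (TensorProduct.mk ℂ _ _).flip (wordElem θ w * d) ∘ₗ LinearMap.mulLeft ℂ a ∘ₗ
          degScale (qf q (degW θ w)) :=
      ext_words fun v => by simp [S.mulB_spec, degScale_word, TensorProduct.smul_tmul']
    exact LinearMap.congr_fun h c
  refine eq_of_mem_homogD (f := S.mulB.flip (c ⊗ₜ d) ∘ₗ TensorProduct.mk ℂ _ _ a)
    (g := TensorProduct.mk ℂ _ _ (a * degScale (qf q β) c) ∘ₗ LinearMap.mulRight ℂ d) hb ?_
  rintro w rfl
  exact hword w

lemma mulB_of_mem (S : BraidedStr θ q) (a d : TV θ) {b c : TV θ} {β γ : Fin θ → ℕ}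
    (hb : b ∈ homogD θ β) (hc : c ∈ homogD θ γ) :
    S.mulB (a ⊗ₜ b) (c ⊗ₜ d) = qf q β γ • ((a * c) ⊗ₜ (b * d)) := by
  rw [S.mulB_eq_left_twist a c d hb, degScale_of_mem _ hc, mul_smul_comm,
    TensorProduct.smul_tmul']

lemma mulB_eq_right_twist (S : BraidedStr θ q) (a b d : TV θ) {c : TV θ} {γ : Fin θ → ℕ}
    (hc : c ∈ homogD θ γ) :
    S.mulB (a ⊗ₜ b) (c ⊗ₜ d) = (a * c) ⊗ₜ (degScale (fun e => qf q e γ) b * d) := by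
  have h : S.mulB.flip (c ⊗ₜ d) ∘ₗ TensorProduct.mk ℂ _ _ a
      = TensorProduct.mk ℂ _ _ (a * c) ∘ₗ LinearMap.mulRight ℂ d ∘ₗ
        degScale (fun e => qf q e γ) :=
    ext_words fun w => by
      simp [S.mulB_of_mem a d (word_mem_homogD w) hc, degScale_word]
  exact LinearMap.congr_fun h b

lemma mulB_tmul_one (S : BraidedStr θ q) (a c d : TV θ) :
    S.mulB (a ⊗ₜ 1) (c ⊗ₜ d) = (a * c) ⊗ₜ d := by
  simpa [funext (qf_zero_left q), degScale_one] using
    S.mulB_eq_left_twist a c d one_mem_homogD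

lemma mulB_one_tmul (S : BraidedStr θ q) (a b d : TV θ) :
    S.mulB (a ⊗ₜ b) (1 ⊗ₜ d) = a ⊗ₜ (b * d) := by
  simpa [degScale_one] using S.mulB_eq_right_twist a b d one_mem_homogD

end BraidedStr

section Contraction

variable {θ : ℕ} {q : Fin θ → Fin θ → ℂˣ}

/-- Contraction of the right tensor factor with a functional. -/
def contractR (f : TV θ →ₗ[ℂ] ℂ) : TV θ ⊗[ℂ] TV θ →ₗ[ℂ] TV θ :=
  (TensorProduct.rid ℂ (TV θ)).toLinearMap ∘ₗ f.lTensor (TV θ)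

/-- Contraction of the left tensor factor with a functional. -/
def contractL (f : TV θ →ₗ[ℂ] ℂ) : TV θ ⊗[ℂ] TV θ →ₗ[ℂ] TV θ :=
  (TensorProduct.lid ℂ (TV θ)).toLinearMap ∘ₗ f.rTensor (TV θ)

@[simp]
lemma contractR_tmul (f : TV θ →ₗ[ℂ] ℂ) (x y : TV θ) : contractR f (x ⊗ₜ y) = f y • x := by
  simp [contractR]

@[simp]
lemma contractL_tmul (f : TV θ →ₗ[ℂ] ℂ) (x y : TV θ) : contractL f (x ⊗ₜ y) = f x • y := by
  simp [contractL]

lemma contractR_gen_mul (S : BraidedStr θ q) (i : Fin θ) (M : TV θ ⊗[ℂ] TV θ) :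
    contractR (coeffW []) (S.mulB (S.Δ (gen θ i)) M)
      = gen θ i * contractR (coeffW []) M := by
  have h : contractR (coeffW []) ∘ₗ S.mulB (S.Δ (gen θ i))
      = LinearMap.mulLeft ℂ (gen θ i) ∘ₗ contractR (coeffW []) := TensorProduct.ext' fun x y => by
    simp [S.Δ_gen, S.mulB_tmul_one, S.mulB_eq_left_twist _ _ _ (gen_mem_homogD i),
      coeffW_nil_mul]
  exact LinearMap.congr_fun h M

lemma contractL_gen_mul (S : BraidedStr θ q) (i : Fin θ) (M : TV θ ⊗[ℂ] TV θ) :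
    contractL (coeffW []) (S.mulB (S.Δ (gen θ i)) M)
      = gen θ i * contractL (coeffW []) M := by
  have h : contractL (coeffW []) ∘ₗ S.mulB (S.Δ (gen θ i))
      = LinearMap.mulLeft ℂ (gen θ i) ∘ₗ contractL (coeffW []) := TensorProduct.ext' fun x y => by
    simp [S.Δ_gen, S.mulB_tmul_one, S.mulB_eq_left_twist _ _ _ (gen_mem_homogD i),
      coeffW_nil_mul, coeffW_degScale]
  exact LinearMap.congr_fun h M

lemma contractR_comul (S : BraidedStr θ q) (x : TV θ) : contractR (coeffW []) (S.Δ x) = x := by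
  have h : contractR (coeffW []) ∘ₗ S.Δ = LinearMap.id := ext_words fun w => by
    induction w with
    | nil => simp [S.Δ_one]
    | cons i w ih =>
      simpa [S.Δ_mul, contractR_gen_mul] using congrArg (gen θ i * ·) ih
  exact LinearMap.congr_fun h x

lemma contractL_comul (S : BraidedStr θ q) (x : TV θ) : contractL (coeffW []) (S.Δ x) = x := by
  have h : contractL (coeffW []) ∘ₗ S.Δ = LinearMap.id := ext_words fun w => by
    induction w with
    | nil => simp [S.Δ_one]
    | cons i w ih =>
      simpa [S.Δ_mul, contractL_gen_mul] using congrArg (gen θ i * ·) ih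
  exact LinearMap.congr_fun h x

end Contraction

section MixedSub

variable {θ : ℕ} {I : Submodule ℂ (TV θ)}

lemma tmul_mem_mixedSub_left {a : TV θ} (b : TV θ) (ha : a ∈ I) : a ⊗ₜ b ∈ mixedSub I :=
  Submodule.subset_span (Or.inl ⟨a, b, ha, rfl⟩)

lemma tmul_mem_mixedSub_right (a : TV θ) {b : TV θ} (hb : b ∈ I) : a ⊗ₜ b ∈ mixedSub I :=
  Submodule.subset_span (Or.inr ⟨a, b, hb, rfl⟩)

lemma map_mem_of_mem_mixedSub {M : Type*} [AddCommGroup M] [Module ℂ M] {P : Submodule ℂ M}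
    {f : TV θ ⊗[ℂ] TV θ →ₗ[ℂ] M} (left : ∀ a b, a ∈ I → f (a ⊗ₜ b) ∈ P)
    (right : ∀ a b, b ∈ I → f (a ⊗ₜ b) ∈ P) {x : TV θ ⊗[ℂ] TV θ} (hx : x ∈ mixedSub I) :
    f x ∈ P := by
  have h : mixedSub I ≤ P.comap f := Submodule.span_le.mpr <| by
    rintro _ (⟨a, b, ha, rfl⟩ | ⟨a, b, hb, rfl⟩)
    exacts [left a b ha, right a b hb]
  exact h hx

-- With `g` a generalized inverse of `f`, every tensor is congruent modulo `mixedSub (ker f)` to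
-- its image under `(g ∘ f) ⊗ (g ∘ f)`, which vanishes on the kernel of `f ⊗ f`.
lemma ker_map_eq_mixedSub {M : Type*} [AddCommGroup M] [Module ℂ M] (f : TV θ →ₗ[ℂ] M) :
    LinearMap.ker (TensorProduct.map f f) = mixedSub (LinearMap.ker f) := by
  apply le_antisymm
  · obtain ⟨s, hs⟩ := f.rangeRestrict.exists_rightInverse_of_surjective f.range_rangeRestrict
    obtain ⟨g, hg⟩ := s.exists_extend
    have hker (a : TV θ) : a - g (f a) ∈ LinearMap.ker f := by
      have hga : g (f a) = s (f.rangeRestrict a) := LinearMap.congr_fun hg (f.rangeRestrict a)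
      have hfs := congrArg Subtype.val (LinearMap.congr_fun hs (f.rangeRestrict a))
      simpa [hga, sub_eq_zero] using hfs.symm
    have hsub (x : TV θ ⊗[ℂ] TV θ) :
        (LinearMap.id - TensorProduct.map g g ∘ₗ TensorProduct.map f f :
          TV θ ⊗[ℂ] TV θ →ₗ[ℂ] TV θ ⊗[ℂ] TV θ) x ∈ mixedSub (LinearMap.ker f) := by
      refine map_mem_of_tmul_words (fun v w => ?_) x
      have h := add_mem
        (tmul_mem_mixedSub_left (wordElem θ w) (hker (wordElem θ v)))
        (tmul_mem_mixedSub_right (g (f (wordElem θ v))) (hker (wordElem θ w)))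
      simpa [TensorProduct.sub_tmul, TensorProduct.tmul_sub] using h
    intro x hx
    simpa [LinearMap.mem_ker.mp hx] using hsub x
  · intro x hx
    exact map_mem_of_mem_mixedSub (P := ⊥) (f := TensorProduct.map f f)
      (fun a b ha => by simp [LinearMap.mem_ker.mp ha])
      (fun a b hb => by simp [LinearMap.mem_ker.mp hb]) hx

lemma contractR_mem {f : TV θ →ₗ[ℂ] ℂ} (hf : ∀ x ∈ I, f x = 0) {M : TV θ ⊗[ℂ] TV θ}
    (hM : M ∈ mixedSub I) : contractR f M ∈ I :=
  map_mem_of_mem_mixedSub (fun a b ha => by simpa using I.smul_mem _ ha)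
    (fun a b hb => by simp [hf b hb]) hM

lemma contractL_mem {f : TV θ →ₗ[ℂ] ℂ} (hf : ∀ x ∈ I, f x = 0) {M : TV θ ⊗[ℂ] TV θ}
    (hM : M ∈ mixedSub I) : contractL f M ∈ I :=
  map_mem_of_mem_mixedSub (fun a b ha => by simp [hf a ha])
    (fun a b hb => by simpa using I.smul_mem _ hb) hM

end MixedSub

namespace IsPreNicholsIdeal

variable {θ : ℕ} {q : Fin θ → Fin θ → ℂˣ} {S : BraidedStr θ q} {I : Submodule ℂ (TV θ)}

lemma map_mem_of_homogTot {M : Type*} [AddCommGroup M] [Module ℂ M] {P : Submodule ℂ M}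
    {f : TV θ →ₗ[ℂ] M} (hI : IsPreNicholsIdeal S I)
    (h : ∀ n, 2 ≤ n → ∀ x ∈ I, x ∈ homogTot θ n → f x ∈ P) {x : TV θ} (hx : x ∈ I) :
    f x ∈ P := by
  rw [hI.homog_ge2] at hx
  refine (Submodule.span_le (p := P.comap f)).mpr ?_ hx
  rintro x ⟨hxI, n, hn, hxn⟩
  exact h n hn x hxI hxn

lemma coeffW_eq_zero (hI : IsPreNicholsIdeal S I) {v : List (Fin θ)} (hv : v.length < 2)
    {x : TV θ} (hx : x ∈ I) : coeffW v x = 0 :=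
  hI.map_mem_of_homogTot (P := ⊥)
    (fun _ hn _ _ hxn => coeffW_of_mem_homogTot hxn (hv.trans_le hn).ne) hx

lemma projTot_mem (hI : IsPreNicholsIdeal S I) (n : ℕ) {x : TV θ} (hx : x ∈ I) :
    projTot n x ∈ I := by
  refine hI.map_mem_of_homogTot (fun m _ x hxI hxm => ?_) hx
  rw [projTot_of_mem n hxm]
  split_ifs
  exacts [hxI, zero_mem _]

lemma mulB_tmul_one_mem (hI : IsPreNicholsIdeal S I) (a : TV θ) {M : TV θ ⊗[ℂ] TV θ}
    (hM : M ∈ mixedSub I) : S.mulB (a ⊗ₜ 1) M ∈ mixedSub I := by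
  refine map_mem_of_mem_mixedSub (fun c d hc => ?_) (fun c d hd => ?_) hM <;>
    rw [S.mulB_tmul_one]
  exacts [tmul_mem_mixedSub_left _ (hI.mul_left _ _ hc), tmul_mem_mixedSub_right _ hd]

lemma mulB_one_tmul_mem (hI : IsPreNicholsIdeal S I) (d : TV θ) {M : TV θ ⊗[ℂ] TV θ}
    (hM : M ∈ mixedSub I) : S.mulB M (1 ⊗ₜ d) ∈ mixedSub I := by
  refine map_mem_of_mem_mixedSub (f := S.mulB.flip (1 ⊗ₜ d)) (fun a b ha => ?_)
    (fun a b hb => ?_) hM <;> rw [LinearMap.flip_apply, S.mulB_one_tmul]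
  exacts [tmul_mem_mixedSub_left _ ha, tmul_mem_mixedSub_right _ (hI.mul_right _ _ hb)]

-- The twist is the coefficient of `x_i` in the right factor of `(1 ⊗ x_i) Δ(x)`.
lemma left_twist_δ_mem (hI : IsPreNicholsIdeal S I) (i : Fin θ) {x : TV θ} (hx : x ∈ I) :
    degScale (qf q (δ θ i)) x ∈ I := by
  have hmem : S.mulB (1 ⊗ₜ gen θ i) (S.Δ x) ∈ mixedSub I := by
    have := sub_mem (hI.coideal _ (hI.mul_left (gen θ i) x hx))
      (hI.mulB_tmul_one_mem (gen θ i) (hI.coideal x hx))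
    rwa [S.Δ_mul, S.Δ_gen, map_add, LinearMap.add_apply, add_sub_cancel_left] at this
  have hcontract : contractR (coeffW [i]) ∘ₗ S.mulB (1 ⊗ₜ gen θ i)
      = degScale (qf q (δ θ i)) ∘ₗ contractR (coeffW []) := TensorProduct.ext' fun a b => by
    simp [S.mulB_eq_left_twist _ _ _ (gen_mem_homogD i), coeffW_singleton_gen_mul]
  rw [← contractR_comul S x, ← LinearMap.comp_apply, ← hcontract]
  exact contractR_mem (fun x hx => hI.coeffW_eq_zero (by simp) hx) hmem

lemma right_twist_δ_mem (hI : IsPreNicholsIdeal S I) (i : Fin θ) {x : TV θ} (hx : x ∈ I) :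
    degScale (fun d => qf q d (δ θ i)) x ∈ I := by
  have hmem : S.mulB (S.Δ x) (gen θ i ⊗ₜ 1) ∈ mixedSub I := by
    have := sub_mem (hI.coideal _ (hI.mul_right (gen θ i) x hx))
      (hI.mulB_one_tmul_mem (gen θ i) (hI.coideal x hx))
    rwa [S.Δ_mul, S.Δ_gen, map_add, add_sub_cancel_right] at this
  have hcontract : contractL (coeffW [i]) ∘ₗ S.mulB.flip (gen θ i ⊗ₜ 1)
      = degScale (fun d => qf q d (δ θ i)) ∘ₗ contractL (coeffW []) :=
    TensorProduct.ext' fun a b => by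
      simp [S.mulB_eq_right_twist _ _ _ (gen_mem_homogD i), coeffW_singleton_mul_gen]
  rw [← contractL_comul S x, ← LinearMap.comp_apply, ← hcontract]
  exact contractL_mem (fun x hx => hI.coeffW_eq_zero (by simp) hx) hmem

lemma left_twist_degW_mem (hI : IsPreNicholsIdeal S I) (w : List (Fin θ)) {x : TV θ}
    (hx : x ∈ I) : degScale (qf q (degW θ w)) x ∈ I := by
  induction w with
  | nil => simpa [funext (qf_zero_left q), degScale_one] using hx
  | cons i w ih =>
    rw [degW_cons, funext (qf_add_left q _ _), degScale_mul]
    exact hI.left_twist_δ_mem i ih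

lemma right_twist_degW_mem (hI : IsPreNicholsIdeal S I) (w : List (Fin θ)) {x : TV θ}
    (hx : x ∈ I) : degScale (fun d => qf q d (degW θ w)) x ∈ I := by
  induction w with
  | nil => simpa [degScale_one] using hx
  | cons i w ih =>
    simp only [degW_cons, qf_add_right, degScale_mul]
    exact hI.right_twist_δ_mem i ih

lemma mulB_mem_left (hI : IsPreNicholsIdeal S I) {M : TV θ ⊗[ℂ] TV θ} (N : TV θ ⊗[ℂ] TV θ)
    (hM : M ∈ mixedSub I) : S.mulB M N ∈ mixedSub I := by
  refine map_mem_of_tmul_words (fun v w => ?_) N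
  refine map_mem_of_mem_mixedSub (f := S.mulB.flip _) (fun a b ha => ?_) (fun a b hb => ?_) hM <;>
    rw [LinearMap.flip_apply, S.mulB_eq_right_twist _ _ _ (word_mem_homogD v)]
  · exact tmul_mem_mixedSub_left _ (hI.mul_right _ _ ha)
  · exact tmul_mem_mixedSub_right _ (hI.mul_right _ _ (hI.right_twist_degW_mem v hb))

lemma mulB_mem_right (hI : IsPreNicholsIdeal S I) (M : TV θ ⊗[ℂ] TV θ) {N : TV θ ⊗[ℂ] TV θ}
    (hN : N ∈ mixedSub I) : S.mulB M N ∈ mixedSub I := by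
  refine map_mem_of_tmul_words (f := S.mulB.flip N) (fun v w => ?_) M
  rw [LinearMap.flip_apply]
  refine map_mem_of_mem_mixedSub (fun c d hc => ?_) (fun c d hd => ?_) hN <;>
    rw [S.mulB_eq_left_twist _ _ _ (word_mem_homogD w)]
  · exact tmul_mem_mixedSub_left _ (hI.mul_left _ _ (hI.left_twist_degW_mem w hc))
  · exact tmul_mem_mixedSub_right _ (hI.mul_left _ _ hd)

lemma mulB_congr (hI : IsPreNicholsIdeal S I) {M M' N N' : TV θ ⊗[ℂ] TV θ}
    (hM : M ≡ M' [SMOD mixedSub I]) (hN : N ≡ N' [SMOD mixedSub I]) :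
    S.mulB M N ≡ S.mulB M' N' [SMOD mixedSub I] := by
  rw [SModEq.sub_mem] at hM hN ⊢
  simpa using add_mem (hI.mulB_mem_left N hM) (hI.mulB_mem_right M' hN)

end IsPreNicholsIdeal

section Homogenization

variable {θ : ℕ} {q : Fin θ → Fin θ → ℂˣ}

/-- The component of total degree `n` of `T(V) ⊗ T(V)`. -/
def homogTensor (θ n : ℕ) : Submodule ℂ (TV θ ⊗[ℂ] TV θ) :=
  Submodule.span ℂ
    {x | ∃ v w : List (Fin θ), v.length + w.length = n ∧ x = wordElem θ v ⊗ₜ wordElem θ w}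

/-- The projection of `T(V) ⊗ T(V)` onto `homogTensor θ n`. -/
def projTensor (n : ℕ) : TV θ ⊗[ℂ] TV θ →ₗ[ℂ] TV θ ⊗[ℂ] TV θ :=
  ∑ p ∈ Finset.HasAntidiagonal.antidiagonal n, TensorProduct.map (projTot p.1) (projTot p.2)

lemma projTensor_tmul (n : ℕ) (x y : TV θ) :
    projTensor n (x ⊗ₜ y)
      = ∑ p ∈ Finset.HasAntidiagonal.antidiagonal n, projTot p.1 x ⊗ₜ[ℂ] projTot p.2 y := by
  simp [projTensor, LinearMap.sum_apply]

lemma projTensor_word (n : ℕ) (v w : List (Fin θ)) :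
    projTensor n (wordElem θ v ⊗ₜ wordElem θ w)
      = if v.length + w.length = n then wordElem θ v ⊗ₜ[ℂ] wordElem θ w else 0 := by
  have h (p : ℕ × ℕ) : projTot p.1 (wordElem θ v) ⊗ₜ[ℂ] projTot p.2 (wordElem θ w)
      = if (v.length, w.length) = p then wordElem θ v ⊗ₜ[ℂ] wordElem θ w else 0 := by
    simp only [projTot_word, Prod.ext_iff]
    split_ifs <;> simp_all
  simp only [projTensor_tmul, h, Finset.sum_ite_eq, Finset.HasAntidiagonal.mem_antidiagonal]

lemma projTensor_of_mem {n : ℕ} (m : ℕ) {x : TV θ ⊗[ℂ] TV θ} (hx : x ∈ homogTensor θ n) :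
    projTensor m x = if n = m then x else 0 := by
  refine (LinearMap.eqOn_span (g := if n = m then LinearMap.id else 0) ?_ hx).trans ?_
  · rintro _ ⟨v, w, rfl, rfl⟩
    rw [projTensor_word]
    split_ifs <;> rfl
  · split_ifs <;> rfl

lemma mulB_comul_gen_mem_homogTensor (S : BraidedStr θ q) (i : Fin θ) {n : ℕ}
    {x : TV θ ⊗[ℂ] TV θ} (hx : x ∈ homogTensor θ n) :
    S.mulB (S.Δ (gen θ i)) x ∈ homogTensor θ (n + 1) := by
  refine (Submodule.span_le (p := (homogTensor θ (n + 1)).comap _)).mpr ?_ hx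
  rintro _ ⟨v, w, rfl, rfl⟩
  have h : S.mulB (S.Δ (gen θ i)) (wordElem θ v ⊗ₜ wordElem θ w)
      = wordElem θ (i :: v) ⊗ₜ wordElem θ w
        + qf q (δ θ i) (degW θ v) • (wordElem θ v ⊗ₜ wordElem θ (i :: w)) := by
    simp [S.Δ_gen, S.mulB_tmul_one, S.mulB_of_mem _ _ (gen_mem_homogD i) (word_mem_homogD v)]
  rw [SetLike.mem_coe, Submodule.mem_comap, h]
  exact add_mem (Submodule.subset_span ⟨i :: v, w, Nat.succ_add _ _, rfl⟩)
    (Submodule.smul_mem _ _ (Submodule.subset_span ⟨v, i :: w, Nat.add_succ _ _, rfl⟩))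

lemma comul_word_mem_homogTensor (S : BraidedStr θ q) (w : List (Fin θ)) :
    S.Δ (wordElem θ w) ∈ homogTensor θ w.length := by
  induction w with
  | nil => exact Submodule.subset_span ⟨[], [], rfl, S.Δ_one⟩
  | cons i w ih =>
    rw [wordElem_cons, S.Δ_mul]
    exact mulB_comul_gen_mem_homogTensor S i ih

lemma projTensor_comul (S : BraidedStr θ q) (n : ℕ) (x : TV θ) :
    projTensor n (S.Δ x) = S.Δ (projTot n x) := by
  have h : projTensor n ∘ₗ S.Δ = S.Δ ∘ₗ projTot n := ext_words fun w => by
    simp only [LinearMap.comp_apply, projTot_word,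
      projTensor_of_mem n (comul_word_mem_homogTensor S w)]
    split_ifs <;> simp
  exact LinearMap.congr_fun h x

lemma word_mul_projTot (w : List (Fin θ)) (n : ℕ) (x : TV θ) :
    wordElem θ w * projTot n x = projTot (w.length + n) (wordElem θ w * x) := by
  have h : LinearMap.mulLeft ℂ (wordElem θ w) ∘ₗ projTot n
      = projTot (w.length + n) ∘ₗ LinearMap.mulLeft ℂ (wordElem θ w) := ext_words fun v => by
    simp [← wordElem_append, projTot_word]
  exact LinearMap.congr_fun h x

lemma projTot_mul_word (w : List (Fin θ)) (n : ℕ) (x : TV θ) :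
    projTot n x * wordElem θ w = projTot (n + w.length) (x * wordElem θ w) := by
  have h : LinearMap.mulRight ℂ (wordElem θ w) ∘ₗ projTot n
      = projTot (n + w.length) ∘ₗ LinearMap.mulRight ℂ (wordElem θ w) := ext_words fun v => by
    simp [← wordElem_append, projTot_word]
  exact LinearMap.congr_fun h x

lemma ext_coeffW {x y : TV θ} (h : ∀ w, coeffW w x = coeffW w y) : x = y :=
  (wordBasis θ).ext_elem h

lemma projTot_eq_zero {n : ℕ} {x : TV θ} (h : ∀ w, w.length = n → coeffW w x = 0) :
    projTot n x = 0 :=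
  ext_coeffW fun w => by
    rw [coeffW_projTot, map_zero]
    split_ifs with hw
    exacts [h w hw, rfl]

lemma exists_sum_projTot (x : TV θ) : ∃ N, ∑ n ∈ Finset.range N, projTot n x = x := by
  refine ⟨((wordBasis θ).repr x).support.sup List.length + 1, ext_coeffW fun w => ?_⟩
  simp only [map_sum, coeffW_projTot, Finset.sum_ite_eq, Finset.mem_range]
  split_ifs with hw
  · rfl
  · by_contra hne
    exact hw (Nat.lt_succ_of_le (Finset.le_sup (f := List.length)
      (Finsupp.mem_support_iff.mpr (Ne.symm hne))))

/-- The smallest homogeneous subspace containing `K`. -/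
def homogenization (K : Submodule ℂ (TV θ)) : Submodule ℂ (TV θ) :=
  Submodule.span ℂ {x | ∃ f ∈ K, ∃ n, x = projTot n f}

lemma projTot_mem_homogenization {K : Submodule ℂ (TV θ)} {f : TV θ} (hf : f ∈ K) (n : ℕ) :
    projTot n f ∈ homogenization K :=
  Submodule.subset_span ⟨f, hf, n, rfl⟩

lemma map_mem_of_mem_homogenization {M : Type*} [AddCommGroup M] [Module ℂ M]
    {P : Submodule ℂ M} {K : Submodule ℂ (TV θ)} {g : TV θ →ₗ[ℂ] M}
    (h : ∀ f ∈ K, ∀ n, g (projTot n f) ∈ P) {x : TV θ} (hx : x ∈ homogenization K) : g x ∈ P := by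
  refine (Submodule.span_le (p := P.comap g)).mpr ?_ hx
  rintro _ ⟨f, hf, n, rfl⟩
  exact h f hf n

lemma le_homogenization (K : Submodule ℂ (TV θ)) : K ≤ homogenization K := by
  intro f hf
  obtain ⟨N, hN⟩ := exists_sum_projTot f
  rw [← hN]
  exact sum_mem fun n _ => projTot_mem_homogenization hf n

lemma projTensor_mem_mixedSub {K : Submodule ℂ (TV θ)} (n : ℕ) {M : TV θ ⊗[ℂ] TV θ}
    (hM : M ∈ mixedSub K) : projTensor n M ∈ mixedSub (homogenization K) := by
  refine map_mem_of_mem_mixedSub (fun a b ha => ?_) (fun a b hb => ?_) hM <;>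
    rw [projTensor_tmul]
  · exact sum_mem fun p _ => tmul_mem_mixedSub_left _ (projTot_mem_homogenization ha _)
  · exact sum_mem fun p _ => tmul_mem_mixedSub_right _ (projTot_mem_homogenization hb _)

lemma homogenization_isPreNicholsIdeal (S : BraidedStr θ q) {K : Submodule ℂ (TV θ)}
    (mul_left : ∀ a x : TV θ, x ∈ K → a * x ∈ K) (mul_right : ∀ a x : TV θ, x ∈ K → x * a ∈ K)
    (coideal : ∀ x ∈ K, S.Δ x ∈ mixedSub K)
    (low : ∀ x ∈ K, ∀ w : List (Fin θ), w.length < 2 → coeffW w x = 0) :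
    IsPreNicholsIdeal S (homogenization K) where
  mul_left a x hx := by
    refine map_mem_of_words (f := LinearMap.mulRight ℂ x) (fun w => ?_) a
    refine map_mem_of_mem_homogenization (g := LinearMap.mulLeft ℂ (wordElem θ w))
      (fun f hf n => ?_) hx
    rw [LinearMap.mulLeft_apply, word_mul_projTot]
    exact projTot_mem_homogenization (mul_left _ _ hf) _
  mul_right a x hx := by
    refine map_mem_of_words (f := LinearMap.mulLeft ℂ x) (fun w => ?_) a
    refine map_mem_of_mem_homogenization (g := LinearMap.mulRight ℂ (wordElem θ w))
      (fun f hf n => ?_) hx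
    rw [LinearMap.mulRight_apply, projTot_mul_word]
    exact projTot_mem_homogenization (mul_right _ _ hf) _
  homog_ge2 := by
    apply le_antisymm
    · refine Submodule.span_le.2 ?_
      rintro _ ⟨f, hf, n, rfl⟩
      by_cases hn : n < 2
      · rw [projTot_eq_zero fun w hw => low f hf w (hw ▸ hn)]
        exact zero_mem _
      · exact Submodule.subset_span
          ⟨projTot_mem_homogenization hf n, n, not_lt.1 hn, projTot_mem n f⟩
    · exact Submodule.span_le.2 fun x hx => hx.1
  coideal x hx := by
    refine map_mem_of_mem_homogenization (fun f hf n => ?_) hx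
    rw [← projTensor_comul]
    exact projTensor_mem_mixedSub n (coideal f hf)

end Homogenization

section SubBraiding

variable {θ n : ℕ} {q : Fin θ → Fin θ → ℂˣ}

/-- The braiding matrix of a family of homogeneous elements of degrees `D s`. -/
def subMat (q : Fin θ → Fin θ → ℂˣ) (D : Fin n → Fin θ → ℕ) : Fin n → Fin n → ℂˣ :=
  fun s t => Units.mk0 (qf q (D s) (D t)) (qf_ne_zero q _ _)

lemma qf_sum_left {ι : Type*} (s : Finset ι) (f : ι → Fin θ → ℕ) (b : Fin θ → ℕ) :
    qf q (∑ x ∈ s, f x) b = ∏ x ∈ s, qf q (f x) b := by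
  classical
  induction s using Finset.induction_on with
  | empty => simp
  | insert a s ha ih => rw [Finset.sum_insert ha, Finset.prod_insert ha, qf_add_left, ih]

lemma qf_sum_right {ι : Type*} (s : Finset ι) (f : ι → Fin θ → ℕ) (b : Fin θ → ℕ) :
    qf q b (∑ x ∈ s, f x) = ∏ x ∈ s, qf q b (f x) := by
  classical
  induction s using Finset.induction_on with
  | empty => simp
  | insert a s ha ih => rw [Finset.sum_insert ha, Finset.prod_insert ha, qf_add_right, ih]

lemma qf_subMat (D : Fin n → Fin θ → ℕ) (e e' : Fin n → ℕ) :
    qf (subMat q D) e e' = qf q (∑ s, e s • D s) (∑ t, e' t • D t) := by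
  rw [qf_sum_left]
  simp only [qf_sum_right, qf_nsmul_left, qf_nsmul_right, ← pow_mul]
  simp only [qf, subMat, Units.val_mk0]

/-- The algebra map from a free algebra sending the generators to given elements. -/
def subHom (X : Fin n → TV θ) : TV n →ₐ[ℂ] TV θ := FreeAlgebra.lift ℂ X

@[simp]
lemma subHom_gen (X : Fin n → TV θ) (s : Fin n) : subHom X (gen n s) = X s := by
  simp [subHom, gen]

lemma subHom_word_mem {X : Fin n → TV θ} {D : Fin n → Fin θ → ℕ}
    (hX : ∀ s, X s ∈ homogD θ (D s)) (w : List (Fin n)) :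
    subHom X (wordElem n w) ∈ homogD θ (∑ s, degW n w s • D s) := by
  induction w with
  | nil => simpa using one_mem_homogD
  | cons i w ih =>
    rw [wordElem_cons, map_mul, subHom_gen]
    convert homogD_mul (hX i) ih using 2
    simp only [degW_cons, Pi.add_apply, add_smul, Finset.sum_add_distrib]
    congr 1
    simp [δ]

lemma map_subHom_mulB (S : BraidedStr θ q) {X : Fin n → TV θ} {D : Fin n → Fin θ → ℕ}
    (hX : ∀ s, X s ∈ homogD θ (D s)) (S' : BraidedStr n (subMat q D)) (M N : TV n ⊗[ℂ] TV n) :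
    TensorProduct.map (subHom X).toLinearMap (subHom X).toLinearMap (S'.mulB M N)
      = S.mulB (TensorProduct.map (subHom X).toLinearMap (subHom X).toLinearMap M)
          (TensorProduct.map (subHom X).toLinearMap (subHom X).toLinearMap N) := by
  set φ := TensorProduct.map (subHom X).toLinearMap (subHom X).toLinearMap
  have h : S'.mulB.compr₂ φ = S.mulB.compl₁₂ φ φ :=
    ext_tmul_words fun a b => ext_tmul_words fun c d => by
      simp [φ, S'.mulB_spec, qf_subMat,
        S.mulB_of_mem _ _ (subHom_word_mem hX b) (subHom_word_mem hX c)]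
  exact LinearMap.congr_fun₂ h M N

/-- The reduced coproduct `Δ(x) - x ⊗ 1 - 1 ⊗ x`. -/
def redComul (S : BraidedStr θ q) : TV θ →ₗ[ℂ] TV θ ⊗[ℂ] TV θ :=
  S.Δ - (TensorProduct.mk ℂ _ _).flip 1 - TensorProduct.mk ℂ _ _ 1

lemma redComul_apply (S : BraidedStr θ q) (x : TV θ) :
    redComul S x = S.Δ x - x ⊗ₜ 1 - 1 ⊗ₜ x := rfl

/-- The image of `x` in `T(V)/I` is a primitive element. -/
def IsPrimitiveMod (S : BraidedStr θ q) (I : Submodule ℂ (TV θ)) (x : TV θ) : Prop :=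
  redComul S x ∈ mixedSub I

lemma IsPrimitiveMod.comul_modEq {S : BraidedStr θ q} {I : Submodule ℂ (TV θ)} {x : TV θ}
    (h : IsPrimitiveMod S I x) : S.Δ x ≡ x ⊗ₜ 1 + 1 ⊗ₜ x [SMOD mixedSub I] :=
  SModEq.sub_mem.mpr (by rw [← sub_sub]; exact h)

lemma isPrimitiveMod_gen (S : BraidedStr θ q) (I : Submodule ℂ (TV θ)) (i : Fin θ) :
    IsPrimitiveMod S I (gen θ i) := by
  simp [IsPrimitiveMod, redComul_apply, S.Δ_gen]

lemma comul_subHom_word (S : BraidedStr θ q) {I : Submodule ℂ (TV θ)}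
    (hI : IsPreNicholsIdeal S I) {X : Fin n → TV θ} {D : Fin n → Fin θ → ℕ}
    (hX : ∀ s, X s ∈ homogD θ (D s)) (hprim : ∀ s, IsPrimitiveMod S I (X s))
    (S' : BraidedStr n (subMat q D)) (w : List (Fin n)) :
    S.Δ (subHom X (wordElem n w))
      ≡ TensorProduct.map (subHom X).toLinearMap (subHom X).toLinearMap (S'.Δ (wordElem n w))
      [SMOD mixedSub I] := by
  induction w with
  | nil => simp [S.Δ_one, S'.Δ_one]
  | cons s w ih =>
    rw [wordElem_cons, map_mul, S.Δ_mul, S'.Δ_mul, map_subHom_mulB S hX, S'.Δ_gen, subHom_gen]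
    simpa using hI.mulB_congr (hprim s).comul_modEq ih

lemma comul_mem_of_subHom_mem (S : BraidedStr θ q) {I : Submodule ℂ (TV θ)}
    (hI : IsPreNicholsIdeal S I) {X : Fin n → TV θ} {D : Fin n → Fin θ → ℕ}
    (hX : ∀ s, X s ∈ homogD θ (D s)) (hprim : ∀ s, IsPrimitiveMod S I (X s))
    (S' : BraidedStr n (subMat q D)) {f : TV n} (hf : subHom X f ∈ I) :
    S'.Δ f ∈ mixedSub (I.comap (subHom X).toLinearMap) := by
  have hΔ : S.Δ (subHom X f)
      - TensorProduct.map (subHom X).toLinearMap (subHom X).toLinearMap (S'.Δ f)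
      ∈ mixedSub I :=
    map_mem_of_words (f := S.Δ ∘ₗ (subHom X).toLinearMap
      - TensorProduct.map (subHom X).toLinearMap (subHom X).toLinearMap ∘ₗ S'.Δ)
      (fun w => SModEq.sub_mem.mp (comul_subHom_word S hI hX hprim S' w)) f
  have hker : I.comap (subHom X).toLinearMap
      = LinearMap.ker (I.mkQ ∘ₗ (subHom X).toLinearMap) := by
    rw [LinearMap.ker_comp, Submodule.ker_mkQ]
  rw [hker, ← ker_map_eq_mixedSub, LinearMap.mem_ker, TensorProduct.map_comp,
    LinearMap.comp_apply, ← LinearMap.mem_ker, ker_map_eq_mixedSub, Submodule.ker_mkQ]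
  exact (Submodule.sub_mem_iff_right _ (hI.coideal _ hf)).mp hΔ

end SubBraiding

section PrimitiveFamily

variable {θ n : ℕ} {q : Fin θ → Fin θ → ℂˣ}

lemma finiteDimensional_Wfil (N : ℕ) : FiniteDimensional ℂ (Wfil θ N) :=
  FiniteDimensional.span_of_finite ℂ <|
    ((List.finite_length_le (Fin θ) N).image (wordElem θ)).subset fun _ ⟨w, hw, hx⟩ =>
      ⟨w, hw, hx.symm⟩

lemma finrank_map_le_of_ker_le {K V M N : Type*} [Field K] [AddCommGroup V] [Module K V]
    [AddCommGroup M] [Module K M] [AddCommGroup N] [Module K N] (W : Submodule K V)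
    [FiniteDimensional K W] {f : V →ₗ[K] M} {g : V →ₗ[K] N}
    (h : LinearMap.ker f ≤ LinearMap.ker g) :
    Module.finrank K (W.map g) ≤ Module.finrank K (W.map f) := by
  have hf := (f.domRestrict W).finrank_range_add_finrank_ker
  have hg := (g.domRestrict W).finrank_range_add_finrank_ker
  have hker : LinearMap.ker (f.domRestrict W) ≤ LinearMap.ker (g.domRestrict W) :=
    fun x hx => h (x := (x : V)) hx
  have := Submodule.finrank_mono hker
  rw [LinearMap.range_domRestrict] at hf hg
  omega

lemma homogTot_le_Wfil {k N : ℕ} (h : k ≤ N) : homogTot θ k ≤ Wfil θ N := by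
  refine Submodule.span_mono ?_
  rintro _ ⟨w, rfl, rfl⟩
  exact ⟨w, h, rfl⟩

lemma subHom_mem_Wfil {X : Fin n → TV θ} {D : Fin n → Fin θ → ℕ}
    (hX : ∀ s, X s ∈ homogD θ (D s)) {m : ℕ} (hm : ∀ s, ∑ k, D s k ≤ m) {N : ℕ} {f : TV n}
    (hf : f ∈ Wfil n N) : subHom X f ∈ Wfil θ (m * N) := by
  refine (Submodule.span_le (p := (Wfil θ (m * N)).comap (subHom X).toLinearMap)).mpr ?_ hf
  rintro _ ⟨w, hw, rfl⟩
  refine homogTot_le_Wfil ?_ (homogD_le_homogTot _ (subHom_word_mem hX w))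
  calc ∑ k, (∑ s, degW n w s • D s) k
      = ∑ s, degW n w s * ∑ k, D s k := by
        simp only [Finset.sum_apply, Pi.smul_apply, smul_eq_mul, Finset.mul_sum]
        exact Finset.sum_comm
    _ ≤ ∑ s, degW n w s * m := by gcongr with s; exact hm s
    _ = w.length * m := by rw [← Finset.sum_mul, sum_degW]
    _ ≤ m * N := by rw [mul_comm]; gcongr

lemma le_Jq_of_subHom {S : BraidedStr θ q} {I : Submodule ℂ (TV θ)}
    (hI : IsPreNicholsIdeal S I) {X : Fin n → TV θ} {D : Fin n → Fin θ → ℕ}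
    (hX : ∀ s, X s ∈ homogD θ (D s)) (hprim : ∀ s, IsPrimitiveMod S I (X s))
    (hlow : ∀ f, subHom X f ∈ I → ∀ w : List (Fin n), w.length < 2 → coeffW w f = 0)
    (S' : BraidedStr n (subMat q D)) : I.comap (subHom X).toLinearMap ≤ Jq S' := by
  refine (le_homogenization _).trans (le_sSup (homogenization_isPreNicholsIdeal S' ?_ ?_ ?_ hlow))
  · intro b x hx
    simpa using hI.mul_left _ _ hx
  · intro b x hx
    simpa using hI.mul_right _ _ hx
  · exact fun f hf => comul_mem_of_subHom_mem S hI hX hprim S' hf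

theorem finGK_subMat {S : BraidedStr θ q} {I : Submodule ℂ (TV θ)} (hI : IsPreNicholsIdeal S I)
    (hGK : FinGK I) {X : Fin n → TV θ} {D : Fin n → Fin θ → ℕ}
    (hX : ∀ s, X s ∈ homogD θ (D s)) (hprim : ∀ s, IsPrimitiveMod S I (X s))
    (hlow : ∀ f, subHom X f ∈ I → ∀ w : List (Fin n), w.length < 2 → coeffW w f = 0)
    (S' : BraidedStr n (subMat q D)) : FinGK (Jq S') := by
  set φ := (subHom X).toLinearMap
  set m := ∑ s, ∑ k, D s k
  have hm (s) : ∑ k, D s k ≤ m :=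
    Finset.single_le_sum (f := fun s => ∑ k, D s k) (fun _ _ => Nat.zero_le _) (Finset.mem_univ s)
  obtain ⟨C, e, hC⟩ := hGK
  refine ⟨C * (m + 1) ^ e, e, fun N => ?_⟩
  have := finiteDimensional_Wfil (θ := n) N
  have := finiteDimensional_Wfil (θ := θ) (m * N)
  have hker : LinearMap.ker (I.mkQ ∘ₗ φ) ≤ LinearMap.ker (Jq S').mkQ := by
    rw [LinearMap.ker_comp, Submodule.ker_mkQ, Submodule.ker_mkQ]
    exact le_Jq_of_subHom hI hX hprim hlow S'
  have hmap : (Wfil n N).map (I.mkQ ∘ₗ φ) ≤ (Wfil θ (m * N)).map I.mkQ := by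
    rw [Submodule.map_comp]
    exact Submodule.map_mono (Submodule.map_le_iff_le_comap.mpr fun f => subHom_mem_Wfil hX hm)
  calc Module.finrank ℂ ((Wfil n N).map (Jq S').mkQ)
      ≤ Module.finrank ℂ ((Wfil n N).map (I.mkQ ∘ₗ φ)) := finrank_map_le_of_ker_le _ hker
    _ ≤ Module.finrank ℂ ((Wfil θ (m * N)).map I.mkQ) := Submodule.finrank_mono hmap
    _ ≤ C * (m * N + 1) ^ e := hC _
    _ ≤ C * ((m + 1) * (N + 1)) ^ e := by gcongr; nlinarith
    _ = C * (m + 1) ^ e * (N + 1) ^ e := by rw [mul_pow, mul_assoc]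

end PrimitiveFamily

section PrimitivePair

variable {θ : ℕ} {q : Fin θ → Fin θ → ℂˣ} (a : Fin θ) {d : Fin θ → ℕ} {v : TV θ}

lemma pow_gen_mem_homogD (m : ℕ) : gen θ a ^ m ∈ homogD θ (m • δ θ a) := by
  induction m with
  | zero => simpa using one_mem_homogD
  | succ m ih => rw [pow_succ, succ_nsmul]; exact homogD_mul ih (gen_mem_homogD a)

lemma subHom_pair_mem_homogTot (hv : v ∈ homogD θ d) (w : List (Fin 2)) :
    subHom ![gen θ a, v] (wordElem 2 w)
      ∈ homogTot θ (w.count 0 + w.count 1 * ∑ k, d k) := by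
  have hX (s : Fin 2) : ![gen θ a, v] s ∈ homogD θ (![δ θ a, d] s) := by
    fin_cases s
    exacts [gen_mem_homogD a, hv]
  convert homogD_le_homogTot _ (subHom_word_mem hX w) using 2
  simp [Fin.sum_univ_two, Finset.sum_add_distrib, ← Finset.mul_sum, degW, δ]

lemma eq_replicate_zero_of_count_one_eq_zero {w : List (Fin 2)} (h : w.count 1 = 0) :
    w = List.replicate (w.count 0) 0 := by
  have h0 : ∀ s ∈ w, s = 0 := fun s hs => by
    have : s ≠ 1 := fun h1 => List.count_eq_zero.mp h (h1 ▸ hs)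
    omega
  exact List.eq_replicate_iff.mpr ⟨(List.count_eq_length.mpr fun s hs => (h0 s hs).symm).symm, h0⟩

lemma eq_singleton_one_of_count {w : List (Fin 2)} (h0 : w.count 0 = 0) (h1 : w.count 1 = 1) :
    w = [1] := by
  have hlen : w.length = 1 := by
    rw [← sum_degW, Fin.sum_univ_two]
    simp [degW, h0, h1]
  obtain ⟨s, rfl⟩ := List.length_eq_one_iff.mp hlen
  fin_cases s <;> simp_all

lemma coeffW_nil_subHom_pair (hv : v ∈ homogD θ d) (hd : 2 ≤ ∑ k, d k) (f : TV 2) :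
    coeffW [] (subHom ![gen θ a, v] f) = coeffW [] f := by
  refine LinearMap.congr_fun (f := coeffW [] ∘ₗ (subHom ![gen θ a, v]).toLinearMap)
    (ext_words fun w => ?_) f
  rcases w with _ | ⟨s, w⟩
  · simp [coeffW_nil_one]
  · have hX : coeffW [] (![gen θ a, v] s) = 0 := by
      fin_cases s
      · exact coeffW_nil_gen a
      · exact coeffW_of_mem_homogTot (homogD_le_homogTot d hv) (by simp; omega)
    simp [coeffW_nil_mul, hX]

lemma coeffW_singleton_subHom_pair (hv : v ∈ homogD θ d) (hd : 2 ≤ ∑ k, d k) (f : TV 2) :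
    coeffW [a] (subHom ![gen θ a, v] f) = coeffW [0] f := by
  refine LinearMap.congr_fun (f := coeffW [a] ∘ₗ (subHom ![gen θ a, v]).toLinearMap)
    (ext_words fun w => ?_) f
  simp only [LinearMap.comp_apply, AlgHom.toLinearMap_apply, coeffW_word]
  split_ifs with hw
  · rw [hw, wordElem_singleton, subHom_gen, Matrix.cons_val_zero, ← wordElem_singleton,
      coeffW_word, if_pos rfl]
  · refine coeffW_of_mem_homogTot (subHom_pair_mem_homogTot a hv w) fun h => hw ?_
    have h1 : w.count 1 = 0 := by
      by_contra h1
      have := Nat.mul_le_mul (Nat.one_le_iff_ne_zero.mpr h1) hd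
      rw [List.length_singleton] at h
      omega
    rw [eq_replicate_zero_of_count_one_eq_zero h1, show w.count 0 = 1 by simp_all]
    rfl

lemma projTot_subHom_pair (hv : v ∈ homogD θ d) (hd : 2 ≤ ∑ k, d k) (f : TV 2) :
    projTot (∑ k, d k) (subHom ![gen θ a, v] f)
      = coeffW [1] f • v + coeffW (List.replicate (∑ k, d k) 0) f • gen θ a ^ ∑ k, d k := by
  set m := ∑ k, d k
  refine LinearMap.congr_fun (f := projTot m ∘ₗ (subHom ![gen θ a, v]).toLinearMap)
    (g := (coeffW [1]).smulRight v
      + (coeffW (List.replicate m 0)).smulRight (gen θ a ^ m)) (ext_words fun w => ?_) f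
  have hw : projTot m (subHom ![gen θ a, v] (wordElem 2 w))
      = if w.count 0 + w.count 1 * m = m then subHom ![gen θ a, v] (wordElem 2 w) else 0 :=
    projTot_of_mem m (subHom_pair_mem_homogTot a hv w)
  simp only [LinearMap.comp_apply, AlgHom.toLinearMap_apply, LinearMap.add_apply,
    LinearMap.smulRight_apply, coeffW_word]
  by_cases h1 : w = [1]
  · have hne : [1] ≠ List.replicate m (0 : Fin 2) := fun h => by
      have : (1 : Fin 2) ∈ List.replicate m 0 := h ▸ List.mem_singleton_self 1
      exact absurd (List.eq_of_mem_replicate this) (by decide)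
    rw [if_pos h1, h1, if_neg hne, wordElem_singleton, subHom_gen, one_smul, zero_smul, add_zero]
    simp [projTot_of_mem m (homogD_le_homogTot d hv), m]
  by_cases h0 : w = List.replicate m 0
  · rw [if_neg h1, if_pos h0, hw, if_pos (by simp [h0, List.count_replicate]), h0]
    simp [wordElem]
  · rw [if_neg h1, if_neg h0, hw, if_neg fun h => ?_, zero_smul, zero_smul, add_zero]
    rcases Nat.eq_zero_or_pos (w.count 1) with hc | hc
    · exact h0 (by rw [eq_replicate_zero_of_count_one_eq_zero hc, ← h, hc]; simp)
    · have hm := Nat.mul_le_mul_right m hc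
      have hc1 : w.count 1 < 2 := by
        by_contra hc2
        have := Nat.mul_le_mul_right m (not_lt.mp hc2)
        omega
      exact h1 (eq_singleton_one_of_count (by omega) (by omega))

-- The twist by the symmetrized braiding with `x_a` scales `v` and `x_a ^ m` differently.
lemma IsPreNicholsIdeal.eq_zero_of_smul_add_mem {S : BraidedStr θ q} {I : Submodule ℂ (TV θ)}
    (hI : IsPreNicholsIdeal S I) (hv : v ∈ homogD θ d) (hvI : v ∉ I) {m : ℕ}
    (hsep : qsym q (δ θ a) d ≠ (q a a : ℂ) ^ (2 * m)) {b c : ℂ}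
    (h : b • v + c • gen θ a ^ m ∈ I) : b = 0 := by
  have hp := pow_gen_mem_homogD a m
  have htwist : degScale (fun d => qsym q (δ θ a) d) (b • v + c • gen θ a ^ m) ∈ I := by
    have := hI.right_twist_δ_mem a (hI.left_twist_δ_mem a h)
    rw [← degScale_mul] at this
    simpa only [qsym, mul_comm] using this
  have hpow : qsym q (δ θ a) (m • δ θ a) = (q a a : ℂ) ^ (2 * m) := by
    rw [qsym, qf_nsmul_left, qf_nsmul_right, qf_δ_δ]; ring
  rw [map_add, map_smul, map_smul, degScale_of_mem _ hv, degScale_of_mem _ hp, hpow] at htwist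
  have : (b * (qsym q (δ θ a) d - (q a a : ℂ) ^ (2 * m))) • v ∈ I := by
    convert sub_mem htwist (I.smul_mem ((q a a : ℂ) ^ (2 * m)) h) using 1
    module
  by_contra hb
  exact hvI ((I.smul_mem_iff (mul_ne_zero hb (sub_ne_zero.2 hsep))).1 this)

theorem finGK_pair {S : BraidedStr θ q} {I : Submodule ℂ (TV θ)} (hI : IsPreNicholsIdeal S I)
    (hGK : FinGK I) (hv : v ∈ homogD θ d) (hd : 2 ≤ ∑ k, d k) (hprim : IsPrimitiveMod S I v)
    (hvI : v ∉ I) (hsep : qsym q (δ θ a) d ≠ (q a a : ℂ) ^ (2 * ∑ k, d k))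
    (S' : BraidedStr 2 (subMat q ![δ θ a, d])) : FinGK (Jq S') := by
  refine finGK_subMat hI hGK (X := ![gen θ a, v]) ?_ ?_ (fun f hf w hw => ?_) S'
  · rw [Fin.forall_fin_two]
    exact ⟨gen_mem_homogD a, hv⟩
  · rw [Fin.forall_fin_two]
    exact ⟨isPrimitiveMod_gen S I a, hprim⟩
  · rcases w with _ | ⟨s, _ | ⟨t, w⟩⟩
    · rw [← coeffW_nil_subHom_pair a hv hd, hI.coeffW_eq_zero (by simp) hf]
    · fin_cases s
      · rw [Fin.zero_eta, ← coeffW_singleton_subHom_pair a hv hd, hI.coeffW_eq_zero (by simp) hf]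
      · exact hI.eq_zero_of_smul_add_mem a hv hvI hsep
          (projTot_subHom_pair a hv hd f ▸ hI.projTot_mem _ hf)
    · simp at hw

end PrimitivePair

section RankTwo

variable {θ : ℕ} {q : Fin θ → Fin θ → ℂˣ} {N : ℕ} {ζ : ℂ} {i j : Fin θ}

lemma qtil_comm (q : Fin θ → Fin θ → ℂˣ) (i j : Fin θ) : qtil q i j = qtil q j i := mul_comm _ _

lemma mem_cSet_iff (hζ : IsPrimitiveRoot ζ N) {a e : ℕ} (ha : ¬ N ∣ a)
    (hi : (q i i : ℂ) = ζ ^ a) (he : qtil q i j = ζ ^ e) (n : ℕ) :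
    n ∈ cSet q i j ↔ N ∣ a * (n + 1) ∨ N ∣ a * n + e := by
  have hne : ζ ^ a - 1 ≠ 0 := fun h => ha ((hζ.pow_eq_one_iff_dvd a).1 (sub_eq_zero.1 h))
  have h1 : qnum (ζ ^ a) (n + 1) = 0 ↔ N ∣ a * (n + 1) := by
    rw [← hζ.pow_eq_one_iff_dvd, ← mul_left_inj' hne, qnum, geom_sum_mul, zero_mul, sub_eq_zero,
      ← pow_mul]
  have h2 : 1 - (ζ ^ a) ^ n * ζ ^ e = 0 ↔ N ∣ a * n + e := by
    rw [← hζ.pow_eq_one_iff_dvd, sub_eq_zero, ← pow_mul, ← pow_add, eq_comm]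
  rw [cSet, Set.mem_ofPred_eq, hi, he, mul_eq_zero, h1, h2]

lemma reflectMat_self (q : Fin θ → Fin θ → ℂˣ) (i : Fin θ) : reflectMat q i i i = q i i := by
  simp only [reflectMat, cij, if_pos]
  group

lemma reflectMat_apply (hij : i ≠ j) :
    (reflectMat q i j j : ℂ)
      = q j j * qtil q i j ^ sInf (cSet q i j) * (q i i : ℂ) ^ (sInf (cSet q i j)) ^ 2 := by
  have h : reflectMat q i j j = q j j * (q i j * q j i) ^ sInf (cSet q i j)
      * q i i ^ (sInf (cSet q i j)) ^ 2 := by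
    simp only [reflectMat, cij, if_neg hij, neg_neg, Int.ofNat_eq_natCast, zpow_natCast,
      neg_mul_neg, ← Nat.cast_mul, mul_pow, sq, pow_mul]
    rw [mul_comm (q i j ^ _), ← mul_assoc]
  rw [h]
  simp [qtil]

lemma qtil_reflectMat (hij : i ≠ j) :
    qtil (reflectMat q i) i j * (qtil q i j * (q i i : ℂ) ^ (2 * sInf (cSet q i j))) = 1 := by
  have h : (reflectMat q i i j * reflectMat q i j i)
      * (q i j * q j i * q i i ^ (2 * sInf (cSet q i j))) = 1 := by
    simp only [reflectMat, cij, if_neg hij, if_true, neg_neg, Int.ofNat_eq_natCast]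
    apply Units.ext
    push_cast
    simp only [zpow_neg, zpow_natCast, neg_mul, mul_neg, zpow_mul, zpow_ofNat]
    field_simp
    rw [pow_mul]
  simpa [qtil] using congrArg Units.val h

/-- The Dynkin diagram of rank two on the vertices `i, j`, all of whose labels are powers of `ζ`:
`(a, e, b)` stands for the diagram `ζ ^ a —— ζ ^ e —— ζ ^ b`. -/
def HasExponents (ζ : ℂ) (q : Fin θ → Fin θ → ℂˣ) (i j : Fin θ) : ℕ × ℕ × ℕ → Prop
  | (a, e, b) => (q i i : ℂ) = ζ ^ a ∧ qtil q i j = ζ ^ e ∧ (q j j : ℂ) = ζ ^ b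

lemma HasExponents.symm {a e b : ℕ} (h : HasExponents ζ q i j (a, e, b)) :
    HasExponents ζ q j i (b, e, a) :=
  ⟨h.2.2, (qtil_comm q j i).trans h.2.1, h.1⟩

/-- The change of exponents, for `ζ` a primitive `N`-th root of unity, under the reflection at the
first vertex when the entry of the Cartan matrix there is `-m`. -/
def IsReflection (N m : ℕ) : ℕ × ℕ × ℕ → ℕ × ℕ × ℕ → Prop
  | (a, e, b), (a', e', b') => ¬ N ∣ a ∧ (N ∣ a * (m + 1) ∨ N ∣ a * m + e) ∧
    (∀ n < m, ¬ (N ∣ a * (n + 1) ∨ N ∣ a * n + e)) ∧ a' = a ∧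
    N ∣ e' + (e + 2 * m * a) ∧ b' ≡ b + e * m + a * m ^ 2 [MOD N]

instance (N m : ℕ) (t t' : ℕ × ℕ × ℕ) : Decidable (IsReflection N m t t') := by
  unfold IsReflection Nat.ModEq; infer_instance

lemma HasExponents.sInf_cSet (hζ : IsPrimitiveRoot ζ N) {t t' : ℕ × ℕ × ℕ} {m : ℕ}
    (h : HasExponents ζ q i j t) (ht : IsReflection N m t t') : sInf (cSet q i j) = m := by
  obtain ⟨hi, he, -⟩ := h
  obtain ⟨ha, hm, hmin, -⟩ := ht
  have hmem := (mem_cSet_iff hζ ha hi he m).2 hm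
  refine le_antisymm (Nat.sInf_le hmem) (le_of_not_gt fun hlt => ?_)
  exact hmin _ hlt ((mem_cSet_iff hζ ha hi he _).1 (Nat.sInf_mem ⟨m, hmem⟩))

lemma HasExponents.reflect (hζ : IsPrimitiveRoot ζ N) (hij : i ≠ j) {t t' : ℕ × ℕ × ℕ} {m : ℕ}
    (h : HasExponents ζ q i j t) (ht : IsReflection N m t t') :
    HasExponents ζ (reflectMat q i) i j t' := by
  have hinf := h.sInf_cSet hζ ht
  obtain ⟨hi, he, hj⟩ := h
  obtain ⟨-, -, -, ha', he', hb'⟩ := ht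
  refine ⟨?_, ?_, ?_⟩
  · rw [reflectMat_self, hi, ha']
  · have hq := qtil_reflectMat (q := q) hij
    rw [hinf, he, hi, ← pow_mul, ← pow_add, mul_comm t.1] at hq
    have hz := (hζ.pow_eq_one_iff_dvd _).2 he'
    rw [pow_add] at hz
    exact mul_right_cancel₀ (right_ne_zero_of_mul_eq_one hz) (hq.trans hz.symm)
  · rw [reflectMat_apply hij, hinf, he, hi, hj, ← pow_mul, ← pow_mul, ← pow_add, ← pow_add,
      ← pow_mod_orderOf, ← hζ.eq_orderOf, ← (show _ % N = _ % N from hb'), hζ.eq_orderOf,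
      pow_mod_orderOf]

lemma sRefl_apply_self {p : Fin 2 → Fin 2 → ℂˣ} {i j : Fin 2} (hij : i ≠ j) (β : Fin 2 → ℤ) :
    sRefl p i β i = sInf (cSet p i j) * β j - β i := by
  have huniv : ∀ i j : Fin 2, i ≠ j → Finset.univ = {i, j} := by decide
  have hsum : ∑ k, cij p i k * β k = cij p i i * β i + cij p i j * β j := by
    rw [huniv i j hij, Finset.sum_pair hij]
  rw [sRefl, if_pos rfl, hsum, cij, cij, if_pos rfl, if_neg hij, Int.ofNat_eq_natCast]
  ring

lemma not_finiteRootSystem_of_stable {P : (Fin 2 → Fin 2 → ℂˣ) → Prop}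
    (hP : ∀ p, P p → ∀ i j, i ≠ j → 2 ≤ sInf (cSet p i j) ∧ P (reflectMat p i))
    {p : Fin 2 → Fin 2 → ℂˣ} (hp : P p) : ¬ FiniteRootSystem p := by
  rintro ⟨-, hfin⟩
  -- Reflecting alternately at the two vertices makes the coefficients grow without bound.
  have key (n : ℕ) : ∃ p' β i j, i ≠ j ∧ ReachRoot p p' β ∧ P p' ∧ β j < β i ∧ 0 < β i ∧
      (n : ℤ) ≤ β i := by
    induction n with
    | zero => exact ⟨p, _, 0, 1, by simp, .simple 0, hp, by simp⟩
    | succ n ih =>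
      obtain ⟨p', β, i, j, hij, hβ, hp', hlt, hpos, hn⟩ := ih
      obtain ⟨h2, hr⟩ := hP p' hp' j i hij.symm
      have hi : sRefl p' j β i = β i := by simp [sRefl, hij]
      have hcji : (2 : ℤ) ≤ sInf (cSet p' j i) := by exact_mod_cast h2
      have hgt : β i < sRefl p' j β j := by
        rw [sRefl_apply_self hij.symm]
        nlinarith [hcji]
      refine ⟨_, _, j, i, hij.symm, .reflect j hβ, hr, by rwa [hi], hpos.trans hgt, ?_⟩
      push_cast
      omega
  obtain ⟨B, hB⟩ := (hfin.image fun β => max (β 0) (β 1)).bddAbove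
  obtain ⟨p', β, i, j, -, hβ, -, -, -, hn⟩ := key (B.toNat + 1)
  have hle : max (β 0) (β 1) ≤ B := hB ⟨β, ⟨p', hβ⟩, rfl⟩
  have : β i ≤ max (β 0) (β 1) := by fin_cases i <;> simp
  have := Int.self_le_toNat B
  omega

/-- Exponents of a family of rank two diagrams over the ninth roots of unity which is stable under
reflections and under exchanging the vertices, and all of whose Cartan entries are at most `-2`. -/
def infiniteTable : Finset (ℕ × ℕ × ℕ) :=
  {(5, 3, 7), (7, 3, 5), (1, 7, 7), (7, 7, 1), (6, 5, 5), (5, 5, 6), (6, 7, 3), (3, 7, 6),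
    (5, 8, 3), (3, 8, 5)}

lemma symm_mem_infiniteTable : ∀ t ∈ infiniteTable, (t.2.2, t.2.1, t.1) ∈ infiniteTable := by
  decide

lemma exists_isReflection_infiniteTable :
    ∀ t ∈ infiniteTable, ∃ t' ∈ infiniteTable, ∃ m ∈ Finset.Icc 2 8, IsReflection 9 m t t' := by
  decide

theorem not_finiteRootSystem (hζ : IsPrimitiveRoot ζ 9) {p : Fin 2 → Fin 2 → ℂˣ}
    {t : ℕ × ℕ × ℕ} (ht : t ∈ infiniteTable) (hp : HasExponents ζ p 0 1 t) :
    ¬ FiniteRootSystem p := by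
  have swap {p : Fin 2 → Fin 2 → ℂˣ} {i j : Fin 2} (hij : i ≠ j)
      (h : ∃ t ∈ infiniteTable, HasExponents ζ p i j t) (i' j' : Fin 2) (hij' : i' ≠ j') :
      ∃ t ∈ infiniteTable, HasExponents ζ p i' j' t := by
    obtain ⟨t, ht, hp⟩ := h
    have hcases : (i' = i ∧ j' = j) ∨ (i' = j ∧ j' = i) := by omega
    obtain ⟨rfl, rfl⟩ | ⟨rfl, rfl⟩ := hcases
    exacts [⟨t, ht, hp⟩, ⟨_, symm_mem_infiniteTable t ht, hp.symm⟩]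
  refine not_finiteRootSystem_of_stable
    (P := fun p => ∀ i j, i ≠ j → ∃ t ∈ infiniteTable, HasExponents ζ p i j t)
    (fun p hp i j hij => ?_) (swap zero_ne_one ⟨t, ht, hp⟩)
  obtain ⟨t, ht, hp⟩ := hp i j hij
  obtain ⟨t', ht', m, hm, hr⟩ := exists_isReflection_infiniteTable t ht
  exact ⟨hp.sInf_cSet hζ hr ▸ (Finset.mem_Icc.1 hm).1, swap hij ⟨t', ht', hp.reflect hζ hij hr⟩⟩

end RankTwo

section SkewCommutator

variable {K A B : Type*} [CommRing K] [Ring A] [Algebra K A] [Ring B] [Algebra K B]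

/-- The skew commutator `xy - a yx`. -/
def skewComm (a : K) (x y : A) : A := x * y - a • (y * x)

lemma map_skewComm (f : A →ₐ[K] B) (a : K) (x y : A) :
    f (skewComm a x y) = skewComm a (f x) (f y) := by
  simp only [skewComm, map_sub, map_smul, map_mul]

end SkewCommutator

section LeftNormedBracket

variable {θ : ℕ} {q : Fin θ → Fin θ → ℂˣ}

lemma IsPreNicholsIdeal.brk_smodEq {S : BraidedStr θ q} {I : Submodule ℂ (TV θ)}
    (hI : IsPreNicholsIdeal S I) (d e : Fin θ → ℕ) {x x' : TV θ} (h : x ≡ x' [SMOD I])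
    (y : TV θ) : brk q d e x y ≡ brk q d e x' y [SMOD I] := by
  rw [SModEq.sub_mem] at h ⊢
  convert sub_mem (hI.mul_right y _ h) (I.smul_mem (qf q d e) (hI.mul_left y _ h)) using 1
  rw [brk, brk, sub_mul, mul_sub, smul_sub]
  abel

/-- The left-normed bracket `[…[[x_{i_1}, x_{i_2}]_c, x_{i_3}]_c, …, x_{i_n}]_c`, indexed by the
reversed word `i_n, …, i_1`. -/
def leftBrk (q : Fin θ → Fin θ → ℂˣ) : List (Fin θ) → TV θ
  | [] => 1
  | [i] => gen θ i
  | a :: w => brk q (degW θ w) (δ θ a) (leftBrk q w) (gen θ a)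

lemma leftBrk_singleton (i : Fin θ) : leftBrk q [i] = gen θ i := rfl

lemma brk_leftBrk {w : List (Fin θ)} (hw : w ≠ []) {d : Fin θ → ℕ} (hd : degW θ w = d)
    (a : Fin θ) : brk q d (δ θ a) (leftBrk q w) (gen θ a) = leftBrk q (a :: w) := by
  subst hd
  cases w with
  | nil => exact absurd rfl hw
  | cons b w => rfl

lemma leftBrk_mem_homogD (w : List (Fin θ)) : leftBrk q w ∈ homogD θ (degW θ w) := by
  induction w with
  | nil => simpa [leftBrk] using one_mem_homogD
  | cons a w ih =>
    rcases eq_or_ne w [] with rfl | hw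
    · simpa [leftBrk] using gen_mem_homogD a
    · rw [← brk_leftBrk hw rfl, degW_cons, add_comm]
      exact brk_mem_homogD q ih (gen_mem_homogD a)

lemma skewComm_mem_homogD (c : ℂ) {s t : TV θ} {d : Fin θ → ℕ} {a : Fin θ}
    (hs : s ∈ homogD θ d) (ht : t ∈ homogD θ (δ θ a)) :
    skewComm c s t ∈ homogD θ (δ θ a + d) := by
  have h := homogD_mul hs ht
  rw [add_comm] at h
  exact sub_mem h (Submodule.smul_mem _ c (homogD_mul ht hs))

lemma qf_degW_δ (w : List (Fin θ)) (a : Fin θ) :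
    qf q (degW θ w) (δ θ a) = (w.map fun i => (q i a : ℂ)).prod := by
  induction w with
  | nil => simp
  | cons i w ih => simp [degW_cons, qf_add_left, ih]

lemma qsym_degW_δ (w : List (Fin θ)) (a : Fin θ) :
    qsym q (degW θ w) (δ θ a) = (w.map fun i => qtil q i a).prod := by
  induction w with
  | nil => simp [qsym]
  | cons i w ih => simp [degW_cons, qsym_add_left, qsym_δ_δ, ih]

lemma leftBrk_cons_cons (a b : Fin θ) (w : List (Fin θ)) :
    leftBrk q (a :: b :: w) = skewComm (((b :: w).map fun i => (q i a : ℂ)).prod)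
      (leftBrk q (b :: w)) (gen θ a) := by
  rw [← qf_degW_δ]
  rfl

lemma IsPreNicholsIdeal.xw_smodEq_leftBrk {S : BraidedStr θ q} {I : Submodule ℂ (TV θ)}
    (hI : IsPreNicholsIdeal S I) {i k : Fin θ} (hki : leftBrk q [k, i] ∈ I) (j : Fin θ) :
    xw q [i, j, k] ≡ leftBrk q [k, j, i] [SMOD I] := by
  rw [SModEq.sub_mem]
  convert sub_mem (I.smul_mem (q i j : ℂ) (hI.mul_left (gen θ j) _ hki))
    (I.smul_mem (q j k : ℂ) (hI.mul_right (gen θ j) _ hki)) using 1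
  simp only [xw, ad1, brk, leftBrk_cons_cons, leftBrk_singleton, skewComm, degW_cons, degW_nil,
    add_zero, qf_add_right, qf_δ_δ, List.map_cons, List.map_nil, List.prod_cons, List.prod_nil,
    mul_one, mul_sub, sub_mul, mul_smul_comm, smul_mul_assoc, mul_assoc]
  module

end LeftNormedBracket

section BracketCoproduct

variable {θ : ℕ} {q : Fin θ → Fin θ → ℂˣ}

/-- The operator on `T(V) ⊗ T(V)` which takes the coproduct of an element `x` of degree `d` to the
coproduct of `[x, x_a]_c`. -/
def bracketOp (S : BraidedStr θ q) (d : Fin θ → ℕ) (a : Fin θ) :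
    TV θ ⊗[ℂ] TV θ →ₗ[ℂ] TV θ ⊗[ℂ] TV θ :=
  S.mulB.flip (S.Δ (gen θ a)) - qf q d (δ θ a) • S.mulB (S.Δ (gen θ a))

lemma comul_brk (S : BraidedStr θ q) (d : Fin θ → ℕ) (a : Fin θ) (x : TV θ) :
    S.Δ (brk q d (δ θ a) x (gen θ a)) = bracketOp S d a (S.Δ x) := by
  simp [brk, bracketOp, S.Δ_mul]

lemma bracketOp_tmul (S : BraidedStr θ q) (a : Fin θ) {d e : Fin θ → ℕ} {s t : TV θ}
    (hs : s ∈ homogD θ d) (ht : t ∈ homogD θ e) :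
    bracketOp S (d + e) a (s ⊗ₜ t)
      = qf q e (δ θ a) • (brk q d (δ θ a) s (gen θ a) ⊗ₜ t)
        + s ⊗ₜ skewComm (qf q e (δ θ a) * qsym q d (δ θ a)) t (gen θ a) := by
  simp only [bracketOp, LinearMap.sub_apply, LinearMap.flip_apply, LinearMap.smul_apply, S.Δ_gen,
    map_add, LinearMap.add_apply, S.mulB_of_mem _ _ ht (gen_mem_homogD a),
    S.mulB_of_mem _ _ (gen_mem_homogD a) hs, S.mulB_tmul_one, S.mulB_one_tmul, mul_one, one_mul,
    brk, skewComm, qsym, qf_add_left, TensorProduct.sub_tmul, TensorProduct.tmul_sub,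
    TensorProduct.tmul_smul, ← TensorProduct.smul_tmul']
  module

lemma redComul_brk (S : BraidedStr θ q) (a : Fin θ) {d : Fin θ → ℕ} {x : TV θ}
    (hx : x ∈ homogD θ d) :
    redComul S (brk q d (δ θ a) x (gen θ a))
      = bracketOp S d a (redComul S x) + (1 - qsym q d (δ θ a)) • (x ⊗ₜ gen θ a) := by
  have hl := bracketOp_tmul S a hx one_mem_homogD
  have hr := bracketOp_tmul S a one_mem_homogD hx
  rw [add_zero] at hl
  rw [zero_add] at hr
  rw [redComul_apply, redComul_apply, comul_brk, map_sub, map_sub, hl, hr]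
  simp only [brk, skewComm, qsym, qf_zero_left, qf_zero_right, one_mul, mul_one, one_smul,
    sub_self, TensorProduct.zero_tmul, smul_zero, TensorProduct.tmul_sub, TensorProduct.tmul_smul]
  module

lemma IsPreNicholsIdeal.bracketOp_smodEq {S : BraidedStr θ q} {I : Submodule ℂ (TV θ)}
    (hI : IsPreNicholsIdeal S I) (d : Fin θ → ℕ) (a : Fin θ) {M N : TV θ ⊗[ℂ] TV θ}
    (h : M ≡ N [SMOD mixedSub I]) : bracketOp S d a M ≡ bracketOp S d a N [SMOD mixedSub I] := by
  have hΔ := SModEq.refl (U := mixedSub I) (S.Δ (gen θ a))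
  exact (hI.mulB_congr h hΔ).sub ((hI.mulB_congr hΔ h).smul _)

lemma bracketOp_leftBrk_tmul (S : BraidedStr θ q) (a : Fin θ) {u v w : List (Fin θ)}
    (hu : u ≠ []) {t : TV θ} (ht : t ∈ homogD θ (degW θ v)) (hw : (u ++ v).Perm w)
    {r s : ℂ} (hr : (v.map fun i => (q i a : ℂ)).prod = r)
    (hs : r * (u.map fun i => qtil q i a).prod = s) :
    bracketOp S (degW θ w) a (leftBrk q u ⊗ₜ t)
      = r • (leftBrk q (a :: u) ⊗ₜ t) + leftBrk q u ⊗ₜ skewComm s t (gen θ a) := by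
  rw [← degW_perm hw, degW_append, bracketOp_tmul S a (leftBrk_mem_homogD u) ht, brk_leftBrk hu rfl,
    qf_degW_δ, qsym_degW_δ, hr, hs]

lemma redComul_leftBrk_cons (S : BraidedStr θ q) (a : Fin θ) {w : List (Fin θ)} (hw : w ≠ []) :
    redComul S (leftBrk q (a :: w)) = bracketOp S (degW θ w) a (redComul S (leftBrk q w))
      + (1 - (w.map fun i => qtil q i a).prod) • (leftBrk q w ⊗ₜ gen θ a) := by
  rw [← brk_leftBrk hw rfl, redComul_brk S a (leftBrk_mem_homogD w), qsym_degW_δ]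

lemma redComul_leftBrk_pair (S : BraidedStr θ q) (i j : Fin θ) :
    redComul S (leftBrk q [j, i]) = (1 - qtil q i j) • (gen θ i ⊗ₜ gen θ j) := by
  have h : redComul S (gen θ i) = 0 := by simp [redComul_apply, S.Δ_gen]
  simp [redComul_leftBrk_cons S j (List.cons_ne_nil i []), h, leftBrk_singleton]

lemma redComul_leftBrk_triple (S : BraidedStr θ q) (i j k : Fin θ) :
    redComul S (leftBrk q [k, j, i])
      = (1 - qtil q j k * qtil q i k) • (leftBrk q [j, i] ⊗ₜ gen θ k)
        + (1 - qtil q i j) • ((q j k : ℂ) • (leftBrk q [k, i] ⊗ₜ gen θ j)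
          + gen θ i ⊗ₜ skewComm (q j k * qtil q i k) (gen θ j) (gen θ k)) := by
  have h := bracketOp_leftBrk_tmul S k (u := [i]) (v := [j]) (w := [j, i]) (by simp)
    (leftBrk_mem_homogD (q := q) [j]) List.perm_append_comm rfl rfl
  simp only [leftBrk_singleton] at h
  rw [redComul_leftBrk_cons S k (List.cons_ne_nil j [i]), redComul_leftBrk_pair, map_smul, h,
    add_comm]
  simp

lemma isPrimitiveMod_leftBrk_pair (S : BraidedStr θ q) (I : Submodule ℂ (TV θ)) {i j : Fin θ}
    (h : qtil q i j = 1) : IsPrimitiveMod S I (leftBrk q [j, i]) := by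
  rw [IsPrimitiveMod, redComul_leftBrk_pair, h, sub_self, zero_smul]
  exact zero_mem _

lemma isPrimitiveMod_leftBrk_triple (S : BraidedStr θ q) (I : Submodule ℂ (TV θ)) {i j : Fin θ}
    (h : qtil q i j * q j j = 1) : IsPrimitiveMod S I (leftBrk q [j, j, i]) := by
  have h' : q j j * qtil q i j = 1 := by rw [mul_comm, h]
  have hcoef : 1 - qtil q j j * qtil q i j + (1 - qtil q i j) * q j j = 0 := by
    rw [qtil]
    linear_combination (-q j j - 1 : ℂ) * h
  rw [IsPrimitiveMod, redComul_leftBrk_triple, h', skewComm, one_smul, sub_self,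
    TensorProduct.tmul_zero, add_zero, smul_smul, ← add_smul, hcoef, zero_smul]
  exact zero_mem _

end BracketCoproduct

section QuadraticRelations

variable {K A : Type*} [CommRing K] [Ring A] [Algebra K A] {x y z : A} {ζ a b b' c e e' p : K}

lemma mul_mul_mul_of_skewComm (h : skewComm (p * b') (skewComm b' z y) y = 0) (s : A) :
    z * (y * (y * s))
      = (b' * (1 + p)) • (y * (z * (y * s))) - (b' ^ 2 * p) • (y * (y * (z * s))) := by
  rw [← sub_eq_zero, ← zero_mul s, ← h]
  simp only [skewComm, sub_mul, mul_sub, smul_mul_assoc, mul_smul_comm, mul_assoc]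
  module

lemma mul_mul_of_skewComm (h : skewComm (p * b') (skewComm b' z y) y = 0) :
    z * (y * y) = (b' * (1 + p)) • (y * (z * y)) - (b' ^ 2 * p) • (y * (y * z)) := by
  simpa only [mul_one] using mul_mul_mul_of_skewComm h 1

-- After moving `z` to the right of `x` and of `y²`, both sides are in normal form, and their
-- coefficients agree by the equation of the primitive ninth roots of unity.
lemma skewComm_relation_left (hζ : ζ ^ 6 + ζ ^ 3 + 1 = 0) (hb : b * b' = ζ ^ 4)
    (he : e * e' = 1) (hc : c * (1 + ζ ^ 4) = b) (hxz : skewComm e x z = 0)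
    (hzyy : skewComm (ζ ^ 5 * b') (skewComm b' z y) y = 0) :
    (1 - ζ ^ 2 - c * (1 - ζ ^ 7 + (1 - ζ ^ 4) * ζ ^ 6) * b') •
        skewComm (b' * (ζ ^ 5 * a)) (skewComm (b * e) (skewComm a x y) z) y
      + ((1 - ζ ^ 4) * b' * ζ ^ 6) •
        skewComm (b * (b * e)) (skewComm (ζ ^ 5 * a) (skewComm a x y) y) z = 0 := by
  have hzx : z * x = e' • (x * z) := by
    rw [sub_eq_zero.1 hxz, smul_smul, mul_comm e', he, one_smul]
  have hzx' (t : A) : z * (x * t) = e' • (x * (z * t)) := by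
    rw [← mul_assoc, hzx, smul_mul_assoc, mul_assoc]
  simp only [skewComm, mul_sub, sub_mul, mul_smul_comm, smul_mul_assoc, mul_assoc, hzx, hzx',
    mul_mul_of_skewComm hzyy, mul_mul_mul_of_skewComm hzyy]
  clear hxz hzx hzx' hzyy
  match_scalars <;> grind

lemma skewComm_relation_right (hζ : ζ ^ 6 + ζ ^ 3 + 1 = 0) (hb : b * b' = ζ ^ 4)
    (hc : c * (1 + ζ ^ 4) = b) (hzyy : skewComm (ζ ^ 5 * b') (skewComm b' z y) y = 0) :
    skewComm (b ^ 2 * ζ ^ 6) (skewComm (b' * ζ ^ 13) (skewComm b y z) y) z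
      = c • skewComm (b' ^ 2 * ζ ^ 13) (skewComm (b * ζ ^ 6) (skewComm b y z) z) y := by
  rw [← sub_eq_zero]
  simp only [skewComm, mul_sub, sub_mul, mul_smul_comm, smul_mul_assoc, mul_assoc,
    mul_mul_of_skewComm hzyy, mul_mul_mul_of_skewComm hzyy]
  clear hzyy
  match_scalars <;> grind

end QuadraticRelations

section Quotient

variable {θ : ℕ} {q : Fin θ → Fin θ → ℂˣ} {S : BraidedStr θ q} {I : Submodule ℂ (TV θ)}

/-- The defining ideal of a pre-Nichols algebra as a two-sided ideal of `T(V)`; the pre-Nichols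
algebra is the quotient by its congruence relation. -/
def IsPreNicholsIdeal.toTwoSidedIdeal (hI : IsPreNicholsIdeal S I) : TwoSidedIdeal (TV θ) :=
  TwoSidedIdeal.mk' I (zero_mem I) (fun hx hy => add_mem hx hy) (fun hx => neg_mem hx)
    (fun hy => hI.mul_left _ _ hy) (fun hx => hI.mul_right _ _ hx)

lemma IsPreNicholsIdeal.mk_eq_zero_iff (hI : IsPreNicholsIdeal S I) (x : TV θ) :
    hI.toTwoSidedIdeal.ringCon.mkₐ ℂ x = 0 ↔ x ∈ I := by
  have hmem : x ∈ hI.toTwoSidedIdeal ↔ x ∈ I := TwoSidedIdeal.mem_mk' _ _ _ _ _ _ x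
  rw [← hmem, TwoSidedIdeal.mem_iff]
  exact RingCon.eq _

end Quotient

section NinthRootBraiding

variable {θ : ℕ} {q : Fin θ → Fin θ → ℂˣ} {S : BraidedStr θ q} {I : Submodule ℂ (TV θ)} {ζ : ℂ}

/-- The AAH conjecture in rank two. -/
def AAHRankTwo : Prop :=
  ∀ (p : Fin 2 → Fin 2 → ℂˣ) (S : BraidedStr 2 p), FinGK (Jq S) → FiniteRootSystem p

lemma mem_of_isPrimitiveMod (hAAH : AAHRankTwo) (hI : IsPreNicholsIdeal S I) (hGK : FinGK I)
    (hζ : IsPrimitiveRoot ζ 9) (a : Fin θ) {d : Fin θ → ℕ} {v : TV θ} (hv : v ∈ homogD θ d)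
    (hd : 2 ≤ ∑ k, d k) (hprim : IsPrimitiveMod S I v) {t : ℕ × ℕ × ℕ} (ht : t ∈ infiniteTable)
    (haa : (q a a : ℂ) = ζ ^ t.1) (had : qsym q d (δ θ a) = ζ ^ t.2.1)
    (hdd : qf q d d = ζ ^ t.2.2) (hsep : ¬ t.2.1 ≡ t.1 * (2 * ∑ k, d k) [MOD 9]) : v ∈ I := by
  have had' : qsym q (δ θ a) d = ζ ^ t.2.1 := by rw [← had, qsym, qsym, mul_comm]
  by_contra hvI
  refine not_finiteRootSystem hζ ht ?_
    (hAAH _ _ (finGK_pair a hI hGK hv hd hprim hvI ?_ (braidedStr _)))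
  · exact ⟨by simpa [subMat] using haa, by simpa [qtil, subMat, qsym] using had',
      by simpa [subMat] using hdd⟩
  · rwa [had', haa, ← pow_mul, Ne, (hζ.isOfFinOrder (by simp)).pow_eq_pow_iff_modEq,
      ← hζ.eq_orderOf]

lemma cyclotomic_nine (hζ : IsPrimitiveRoot ζ 9) : ζ ^ 6 + ζ ^ 3 + 1 = 0 := by
  have h3 : ζ ^ 3 - 1 ≠ 0 := sub_ne_zero.2 (hζ.pow_ne_one_of_pos_of_lt (by simp) (by simp))
  refine (mul_eq_zero.1 ?_).resolve_left h3
  linear_combination hζ.pow_eq_one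

/-- The braiding matrix of the theorem on the vertices `i, j, k`, with `ζ = q_{ii}`. -/
structure NinthRootBraiding (q : Fin θ → Fin θ → ℂˣ) (i j k : Fin θ) (ζ : ℂ) : Prop where
  prim : IsPrimitiveRoot ζ 9
  ii : (q i i : ℂ) = ζ
  jj : (q j j : ℂ) = ζ ^ 5
  kk : (q k k : ℂ) = ζ ^ 6
  ij : qtil q i j = ζ ^ 8
  jk : qtil q j k = ζ ^ 4
  ik : qtil q i k = 1

namespace NinthRootBraiding

variable {i j k : Fin θ}

lemma leftBrk_ki_mem (h : NinthRootBraiding q i j k ζ) (hAAH : AAHRankTwo)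
    (hI : IsPreNicholsIdeal S I) (hGK : FinGK I) : leftBrk q [k, i] ∈ I := by
  have h9 := h.prim.pow_eq_one
  have hik := h.ik
  rw [qtil] at hik
  refine mem_of_isPrimitiveMod (t := (5, 3, 7)) hAAH hI hGK h.prim j (leftBrk_mem_homogD _)
    ?_ (isPrimitiveMod_leftBrk_pair S I h.ik) (by decide) h.jj ?_ ?_ ?_
  · simp [sum_degW]
  · simp only [qsym_degW_δ, List.map_cons, List.map_nil, List.prod_cons, List.prod_nil, mul_one,
      qtil_comm q k j, h.ij, h.jk]
    linear_combination ζ ^ 3 * h9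
  · simp only [degW_cons, degW_nil, add_zero, qf_add_left, qf_add_right, qf_δ_δ, h.ii, h.kk]
    linear_combination ζ ^ 7 * hik
  · simp [sum_degW, Nat.ModEq]

lemma leftBrk_jjk_mem (h : NinthRootBraiding q i j k ζ) (hAAH : AAHRankTwo)
    (hI : IsPreNicholsIdeal S I) (hGK : FinGK I) : leftBrk q [j, j, k] ∈ I := by
  have h9 := h.prim.pow_eq_one
  have hjk := h.jk
  rw [qtil] at hjk
  refine mem_of_isPrimitiveMod (t := (1, 7, 7)) hAAH hI hGK h.prim i (leftBrk_mem_homogD _)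
    ?_ (isPrimitiveMod_leftBrk_triple S I ?_) (by decide) (by simp [h.ii]) ?_ ?_ ?_
  · simp [sum_degW]
  · rw [qtil_comm, h.jk, h.jj]
    linear_combination h9
  · simp only [qsym_degW_δ, List.map_cons, List.map_nil, List.prod_cons, List.prod_nil, mul_one,
      qtil_comm q j i, qtil_comm q k i, h.ij, h.ik]
    linear_combination ζ ^ 7 * h9
  · simp only [degW_cons, degW_nil, add_zero, qf_add_left, qf_add_right, qf_δ_δ, h.jj, h.kk]
    linear_combination (ζ ^ 26) * (q j k * q k j + ζ ^ 4) * hjk + ζ ^ 7 * (ζ ^ 18 + ζ ^ 9 + 1) * h9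
  · simp [sum_degW, Nat.ModEq]

lemma redComul_leftBrk_kji (h : NinthRootBraiding q i j k ζ) (hki : leftBrk q [k, i] ∈ I) :
    redComul S (leftBrk q [k, j, i])
      ≡ (1 - ζ ^ 4) • (leftBrk q [j, i] ⊗ₜ leftBrk q [k])
        + (1 - ζ ^ 8) • (leftBrk q [i] ⊗ₜ leftBrk q [k, j]) [SMOD mixedSub I] := by
  have hmem := tmul_mem_mixedSub_left (gen θ j) hki
  rw [redComul_leftBrk_triple, h.jk, h.ij, h.ik, SModEq.sub_mem]
  convert (mixedSub I).smul_mem ((1 - ζ ^ 8) * q j k) hmem using 1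
  simp only [leftBrk_cons_cons, leftBrk_singleton, List.map_cons, List.map_nil, List.prod_cons,
    List.prod_nil, mul_one]
  module

lemma qtil_jj (h : NinthRootBraiding q i j k ζ) : qtil q j j = ζ := by
  rw [qtil, h.jj]
  linear_combination ζ * h.prim.pow_eq_one

lemma qtil_kk (h : NinthRootBraiding q i j k ζ) : qtil q k k = ζ ^ 3 := by
  rw [qtil, h.kk]
  linear_combination ζ ^ 3 * h.prim.pow_eq_one

lemma qtil_kj (h : NinthRootBraiding q i j k ζ) : qtil q k j = ζ ^ 4 := by
  rw [qtil_comm, h.jk]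

/-- The right tensor factor at `x_{ij}` in the reduced coproduct of `[x_{ijk}, x_j]_c` modulo
`[x_i, x_k]_c`. -/
def rightFactor (q : Fin θ → Fin θ → ℂˣ) (j k : Fin θ) (ζ : ℂ) : TV θ :=
  (1 - ζ ^ 4) • leftBrk q [j, k] + ((1 - ζ ^ 8) * (q k j * ζ ^ 5)) • leftBrk q [k, j]

lemma rightFactor_mem_homogD : rightFactor q j k ζ ∈ homogD θ (degW θ [j, k]) := by
  have hkj : degW θ [k, j] = degW θ [j, k] := degW_perm (.swap j k [])
  exact add_mem (Submodule.smul_mem _ _ (leftBrk_mem_homogD _))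
    (Submodule.smul_mem _ _ (hkj ▸ leftBrk_mem_homogD _))

lemma skewComm_leftBrk_mem_homogD (c : ℂ) (w : List (Fin θ)) (l : Fin θ) :
    skewComm c (leftBrk q w) (gen θ l) ∈ homogD θ (degW θ (l :: w)) := by
  rw [degW_cons]
  exact skewComm_mem_homogD c (leftBrk_mem_homogD w) (gen_mem_homogD l)

lemma redComul_leftBrk_jkji (h : NinthRootBraiding q i j k ζ) (hI : IsPreNicholsIdeal S I)
    (hki : leftBrk q [k, i] ∈ I) :
    redComul S (leftBrk q [j, k, j, i])
      ≡ (1 - ζ ^ 4) • (leftBrk q [k, j, i] ⊗ₜ leftBrk q [j])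
        + ((1 - ζ ^ 4) * q k j) • (leftBrk q [j, j, i] ⊗ₜ leftBrk q [k])
        + leftBrk q [j, i] ⊗ₜ rightFactor q j k ζ
        + (1 - ζ ^ 8) • (leftBrk q [i] ⊗ₜ skewComm (q k j * ζ ^ 13) (leftBrk q [k, j]) (gen θ j))
      [SMOD mixedSub I] := by
  have hcoef : ([k, j, i].map fun l => qtil q l j).prod = ζ ^ 4 := by
    simp [h.qtil_kj, h.qtil_jj, h.ij, ← pow_succ', h.prim.pow_eq_one]
  have hE := bracketOp_leftBrk_tmul S j (u := [j, i]) (v := [k]) (w := [k, j, i])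
    (r := q k j) (s := q k j) (by simp) (leftBrk_mem_homogD (q := q) [k])
    List.perm_append_comm (by simp)
    (by simp [h.qtil_jj, h.ij, ← pow_succ', h.prim.pow_eq_one])
  have hX := bracketOp_leftBrk_tmul S j (u := [i]) (v := [k, j]) (w := [k, j, i])
    (r := q k j * ζ ^ 5) (s := q k j * ζ ^ 13) (by simp) (leftBrk_mem_homogD (q := q) [k, j])
    List.perm_append_comm (by simp [h.jj])
    (by simp [h.ij, mul_assoc, ← pow_add])
  have hjk : leftBrk q [j, k] = skewComm (q k j : ℂ) (leftBrk q [k]) (gen θ j) := by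
    simp [leftBrk_cons_cons]
  rw [redComul_leftBrk_cons S j (by simp), hcoef]
  refine ((hI.bracketOp_smodEq _ j (h.redComul_leftBrk_kji hki)).add .rfl).trans ?_
  rw [map_add, map_smul, map_smul, hE, hX, ← hjk]
  convert SModEq.rfl using 1
  simp only [rightFactor, leftBrk_singleton, TensorProduct.tmul_add, TensorProduct.tmul_smul]
  module

lemma redComul_leftBrk_kkji (h : NinthRootBraiding q i j k ζ) (hI : IsPreNicholsIdeal S I)
    (hki : leftBrk q [k, i] ∈ I) :
    redComul S (leftBrk q [k, k, j, i])
      ≡ (1 - ζ ^ 7 + (1 - ζ ^ 4) * ζ ^ 6) • (leftBrk q [k, j, i] ⊗ₜ leftBrk q [k])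
        + (1 - ζ ^ 4) • (leftBrk q [j, i] ⊗ₜ skewComm (ζ ^ 10) (leftBrk q [k]) (gen θ k))
        + (1 - ζ ^ 8) • (leftBrk q [i] ⊗ₜ skewComm (q j k * ζ ^ 6) (leftBrk q [k, j]) (gen θ k))
      [SMOD mixedSub I] := by
  have hcoef : ([k, j, i].map fun l => qtil q l k).prod = ζ ^ 7 := by
    simp [h.qtil_kk, h.jk, h.ik, ← pow_add]
  have hE := bracketOp_leftBrk_tmul S k (u := [j, i]) (v := [k]) (w := [k, j, i])
    (r := ζ ^ 6) (s := ζ ^ 10) (by simp) (leftBrk_mem_homogD (q := q) [k])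
    List.perm_append_comm (by simp [h.kk]) (by simp [h.jk, h.ik, ← pow_add])
  have hX := bracketOp_leftBrk_tmul S k (u := [i]) (v := [k, j]) (w := [k, j, i])
    (r := q j k * ζ ^ 6) (s := q j k * ζ ^ 6) (by simp) (leftBrk_mem_homogD (q := q) [k, j])
    List.perm_append_comm (by simp [h.kk, mul_comm]) (by simp [h.ik])
  have hmem := tmul_mem_mixedSub_left (leftBrk q [k, j]) hki
  rw [redComul_leftBrk_cons S k (by simp), hcoef]
  refine ((hI.bracketOp_smodEq _ k (h.redComul_leftBrk_kji hki)).add .rfl).trans ?_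
  rw [map_add, map_smul, map_smul, hE, hX, SModEq.sub_mem]
  convert (mixedSub I).smul_mem ((1 - ζ ^ 8) * (q j k * ζ ^ 6)) hmem using 1
  simp only [leftBrk_singleton]
  module

lemma redComul_leftBrk_kjkji (h : NinthRootBraiding q i j k ζ) (hI : IsPreNicholsIdeal S I)
    (hki : leftBrk q [k, i] ∈ I) :
    redComul S (leftBrk q [k, j, k, j, i])
      ≡ ((1 - ζ ^ 2) • leftBrk q [j, k, j, i]
            + ((1 - ζ ^ 4) * q k j * ζ ^ 6) • leftBrk q [k, j, j, i]) ⊗ₜ leftBrk q [k]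
        + ((1 - ζ ^ 4) * q j k) • (leftBrk q [k, k, j, i] ⊗ₜ leftBrk q [j])
        + leftBrk q [k, j, i] ⊗ₜ ((1 - ζ ^ 4) • skewComm (q j k * ζ ^ 7) (gen θ j) (gen θ k)
            + (q j k * ζ ^ 6) • rightFactor q j k ζ)
        + ((1 - ζ ^ 4) * q k j) • (leftBrk q [j, j, i] ⊗ₜ skewComm (ζ ^ 14) (gen θ k) (gen θ k))
        + leftBrk q [j, i] ⊗ₜ skewComm (q j k * ζ ^ 10) (rightFactor q j k ζ) (gen θ k)
        + (1 - ζ ^ 8) • (leftBrk q [i] ⊗ₜ skewComm (q j k ^ 2 * ζ ^ 6)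
            (skewComm (q k j * ζ ^ 13) (leftBrk q [k, j]) (gen θ j)) (gen θ k))
      [SMOD mixedSub I] := by
  have hcoef : ([j, k, j, i].map fun l => qtil q l k).prod = ζ ^ 2 := by
    simp [h.jk, h.ik, h.qtil_kk, ← pow_add, pow_eq_pow_mod _ h.prim.pow_eq_one]
  have hW := bracketOp_leftBrk_tmul S k (u := [k, j, i]) (v := [j]) (w := [j, k, j, i])
    (r := q j k) (s := q j k * ζ ^ 7) (by simp) (leftBrk_mem_homogD (q := q) [j])
    List.perm_append_comm (by simp)
    (by simp [h.jk, h.ik, h.qtil_kk, ← pow_add])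
  have hF := bracketOp_leftBrk_tmul S k (u := [j, j, i]) (v := [k]) (w := [j, k, j, i])
    (r := ζ ^ 6) (s := ζ ^ 14) (by simp) (leftBrk_mem_homogD (q := q) [k])
    (List.perm_append_comm.trans (.swap j k [j, i])) (by simp [h.kk])
    (by simp [h.jk, h.ik, ← pow_add])
  have hE := bracketOp_leftBrk_tmul S k (u := [j, i]) (v := [j, k]) (w := [j, k, j, i])
    (r := q j k * ζ ^ 6) (s := q j k * ζ ^ 10) (by simp)
    (rightFactor_mem_homogD (q := q) (ζ := ζ)) List.perm_append_comm (by simp [h.kk])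
    (by simp [h.jk, h.ik, mul_assoc, ← pow_add])
  have hX := bracketOp_leftBrk_tmul S k (u := [i]) (v := [j, k, j]) (w := [j, k, j, i])
    (r := q j k ^ 2 * ζ ^ 6) (s := q j k ^ 2 * ζ ^ 6) (by simp)
    (skewComm_leftBrk_mem_homogD (q := q) (q k j * ζ ^ 13) [k, j] j) List.perm_append_comm
    (by simp [h.kk, ← mul_assoc, sq, mul_comm]) (by simp [h.ik])
  have hmem := tmul_mem_mixedSub_left
    (skewComm (q k j * ζ ^ 13) (leftBrk q [k, j]) (gen θ j)) hki
  rw [redComul_leftBrk_cons S k (by simp), hcoef]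
  refine ((hI.bracketOp_smodEq _ k (h.redComul_leftBrk_jkji hI hki)).add .rfl).trans ?_
  rw [map_add, map_add, map_add, map_smul, map_smul, map_smul, hW, hF, hE, hX, SModEq.sub_mem]
  convert (mixedSub I).smul_mem ((1 - ζ ^ 8) * (q j k ^ 2 * ζ ^ 6)) hmem using 1
  simp only [leftBrk_singleton, TensorProduct.tmul_add, TensorProduct.tmul_smul,
    TensorProduct.add_tmul, ← TensorProduct.smul_tmul']
  module

lemma redComul_leftBrk_jkkji (h : NinthRootBraiding q i j k ζ) (hI : IsPreNicholsIdeal S I)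
    (hki : leftBrk q [k, i] ∈ I) :
    redComul S (leftBrk q [j, k, k, j, i])
      ≡ (1 - ζ ^ 8) • (leftBrk q [k, k, j, i] ⊗ₜ leftBrk q [j])
        + ((1 - ζ ^ 7 + (1 - ζ ^ 4) * ζ ^ 6) * q k j) • (leftBrk q [j, k, j, i] ⊗ₜ leftBrk q [k])
        + (1 - ζ ^ 7 + (1 - ζ ^ 4) * ζ ^ 6)
            • (leftBrk q [k, j, i] ⊗ₜ skewComm (q k j * ζ ^ 4) (gen θ k) (gen θ j))
        + ((1 - ζ ^ 4) * q k j ^ 2)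
            • (leftBrk q [j, j, i] ⊗ₜ skewComm (ζ ^ 10) (leftBrk q [k]) (gen θ k))
        + leftBrk q [j, i] ⊗ₜ
            ((1 - ζ ^ 4) • skewComm ((q k j : ℂ) ^ 2)
                (skewComm (ζ ^ 10) (leftBrk q [k]) (gen θ k)) (gen θ j)
              + ((1 - ζ ^ 8) * (q k j ^ 2 * ζ ^ 5))
                • skewComm (q j k * ζ ^ 6) (leftBrk q [k, j]) (gen θ k))
        + (1 - ζ ^ 8) • (leftBrk q [i] ⊗ₜ skewComm (q k j ^ 2 * ζ ^ 13)
            (skewComm (q j k * ζ ^ 6) (leftBrk q [k, j]) (gen θ k)) (gen θ j))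
      [SMOD mixedSub I] := by
  have hcoef : ([k, k, j, i].map fun l => qtil q l j).prod = ζ ^ 8 := by
    simp [h.qtil_kj, h.qtil_jj, h.ij, ← pow_add, ← pow_succ', h.prim.pow_eq_one]
  have hW := bracketOp_leftBrk_tmul S j (u := [k, j, i]) (v := [k]) (w := [k, k, j, i])
    (r := q k j) (s := q k j * ζ ^ 4) (by simp) (leftBrk_mem_homogD (q := q) [k])
    List.perm_append_comm (by simp)
    (by simp [h.qtil_kj, h.qtil_jj, h.ij, ← pow_succ', h.prim.pow_eq_one])
  have hE := bracketOp_leftBrk_tmul S j (u := [j, i]) (v := [k, k]) (w := [k, k, j, i])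
    (r := q k j ^ 2) (s := q k j ^ 2) (by simp)
    (skewComm_leftBrk_mem_homogD (q := q) (ζ ^ 10) [k] k)
    List.perm_append_comm (by simp [sq])
    (by simp [h.qtil_jj, h.ij, ← pow_succ', h.prim.pow_eq_one])
  have hX := bracketOp_leftBrk_tmul S j (u := [i]) (v := [k, k, j]) (w := [k, k, j, i])
    (r := q k j ^ 2 * ζ ^ 5) (s := q k j ^ 2 * ζ ^ 13) (by simp)
    (skewComm_leftBrk_mem_homogD (q := q) (q j k * ζ ^ 6) [k, j] k) List.perm_append_comm
    (by simp [h.jj, ← mul_assoc, sq]) (by simp [h.ij, mul_assoc, ← pow_add])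
  rw [redComul_leftBrk_cons S j (by simp), hcoef]
  refine ((hI.bracketOp_smodEq _ j (h.redComul_leftBrk_kkji hI hki)).add .rfl).trans ?_
  rw [map_add, map_add, map_smul, map_smul, map_smul, hW, hE, hX]
  convert SModEq.rfl using 1
  simp only [leftBrk_singleton, TensorProduct.tmul_add, TensorProduct.tmul_smul]
  module

variable {c : ℂ}

lemma of_inv (h1 : IsPrimitiveRoot (q i i : ℂ) 9) (h2 : (qtil q i j)⁻¹ = (q i i : ℂ))
    (h3 : (q j j : ℂ) = (q i i : ℂ) ^ 5) (h4 : (qtil q j k)⁻¹ = (q i i : ℂ) ^ 5)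
    (h5 : qtil q i k = 1) (h6 : (q k k : ℂ) = (q i i : ℂ) ^ 6) :
    NinthRootBraiding q i j k (q i i) where
  prim := h1
  ii := rfl
  jj := h3
  kk := h6
  ij := by
    rw [← inv_inv (qtil q i j), h2]
    exact inv_eq_of_mul_eq_one_right (by linear_combination h1.pow_eq_one)
  jk := by
    rw [← inv_inv (qtil q j k), h4]
    exact inv_eq_of_mul_eq_one_right (by linear_combination h1.pow_eq_one)
  ik := h5

lemma one_add_qtil_ne_zero (h : NinthRootBraiding q i j k ζ) : 1 + qtil q j k ≠ 0 := by
  intro h0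
  rw [h.jk] at h0
  refine h.prim.pow_ne_one_of_pos_of_lt (by simp : (8 : ℕ) ≠ 0) (by simp) ?_
  linear_combination (ζ ^ 4 - 1) * h0

lemma left_relation_mem (h : NinthRootBraiding q i j k ζ) (hI : IsPreNicholsIdeal S I)
    (hki : leftBrk q [k, i] ∈ I) (hjjk : leftBrk q [j, j, k] ∈ I) (hc : c * (1 + ζ ^ 4) = q j k) :
    (1 - ζ ^ 2 - c * (1 - ζ ^ 7 + (1 - ζ ^ 4) * ζ ^ 6) * q k j) • leftBrk q [j, k, j, i]
      + ((1 - ζ ^ 4) * q k j * ζ ^ 6) • leftBrk q [k, j, j, i] ∈ I := by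
  rw [← hI.mk_eq_zero_iff] at hki hjjk ⊢
  simp only [leftBrk_cons_cons, leftBrk_singleton, map_add, map_smul, map_skewComm, h.jj,
    List.map_cons, List.map_nil, List.prod_cons, List.prod_nil, mul_one] at hki hjjk ⊢
  exact skewComm_relation_left (cyclotomic_nine h.prim) h.jk h.ik hc hki hjjk

lemma right_relation_mem (h : NinthRootBraiding q i j k ζ) (hI : IsPreNicholsIdeal S I)
    (hjjk : leftBrk q [j, j, k] ∈ I) (hc : c * (1 + ζ ^ 4) = q j k) :
    skewComm (q j k ^ 2 * ζ ^ 6) (skewComm (q k j * ζ ^ 13) (leftBrk q [k, j]) (gen θ j)) (gen θ k)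
      - c • skewComm (q k j ^ 2 * ζ ^ 13) (skewComm (q j k * ζ ^ 6) (leftBrk q [k, j]) (gen θ k))
        (gen θ j) ∈ I := by
  rw [← hI.mk_eq_zero_iff] at hjjk ⊢
  simp only [leftBrk_cons_cons, leftBrk_singleton, map_sub, map_smul, map_skewComm, h.jj,
    List.map_cons, List.map_nil, List.prod_cons, List.prod_nil, mul_one] at hjjk ⊢
  exact sub_eq_zero.2 (skewComm_relation_right (cyclotomic_nine h.prim) h.jk hc hjjk)

lemma skewComm_self_eq_smul (h : NinthRootBraiding q i j k ζ) (hc : c * (1 + ζ ^ 4) = q j k) :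
    skewComm (ζ ^ 14) (gen θ k) (gen θ k)
      = (c * q k j) • skewComm (ζ ^ 10) (gen θ k) (gen θ k) := by
  have h9 := cyclotomic_nine h.prim
  have hjk : (q j k : ℂ) * q k j = ζ ^ 4 := h.jk
  simp only [skewComm]
  match_scalars
  grind

lemma rightFactor_relation (h : NinthRootBraiding q i j k ζ) (hc : c * (1 + ζ ^ 4) = q j k) :
    (1 - ζ ^ 4) • skewComm (q j k * ζ ^ 7) (gen θ j) (gen θ k)
        + (q j k * ζ ^ 6) • rightFactor q j k ζ
      = (c * (1 - ζ ^ 7 + (1 - ζ ^ 4) * ζ ^ 6))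
        • skewComm (q k j * ζ ^ 4) (gen θ k) (gen θ j) := by
  have h9 := cyclotomic_nine h.prim
  have hjk : (q j k : ℂ) * q k j = ζ ^ 4 := h.jk
  simp only [rightFactor, leftBrk_cons_cons, leftBrk_singleton, skewComm,
    List.map_cons, List.map_nil, List.prod_cons, List.prod_nil, mul_one]
  match_scalars <;> grind

lemma skewComm_rightFactor (h : NinthRootBraiding q i j k ζ) (hc : c * (1 + ζ ^ 4) = q j k) :
    skewComm (q j k * ζ ^ 10) (rightFactor q j k ζ) (gen θ k)
      = c • ((1 - ζ ^ 4)
            • skewComm ((q k j : ℂ) ^ 2) (skewComm (ζ ^ 10) (gen θ k) (gen θ k)) (gen θ j)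
          + ((1 - ζ ^ 8) * (q k j ^ 2 * ζ ^ 5))
            • skewComm (q j k * ζ ^ 6) (leftBrk q [k, j]) (gen θ k)) := by
  have h9 := cyclotomic_nine h.prim
  have hjk : (q j k : ℂ) * q k j = ζ ^ 4 := h.jk
  simp only [rightFactor, leftBrk_cons_cons, leftBrk_singleton, skewComm, mul_sub, sub_mul,
    mul_add, add_mul, mul_smul_comm, smul_mul_assoc, mul_assoc, List.map_cons, List.map_nil,
    List.prod_cons, List.prod_nil, mul_one]
  match_scalars <;> grind

lemma isPrimitiveMod_relation (h : NinthRootBraiding q i j k ζ) (hI : IsPreNicholsIdeal S I)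
    (hki : leftBrk q [k, i] ∈ I) (hjjk : leftBrk q [j, j, k] ∈ I) (hc : c * (1 + ζ ^ 4) = q j k) :
    IsPrimitiveMod S I (leftBrk q [k, j, k, j, i] - c • leftBrk q [j, k, k, j, i]) := by
  have hl := tmul_mem_mixedSub_left (gen θ k) (h.left_relation_mem hI hki hjjk hc)
  have hr := tmul_mem_mixedSub_right (gen θ i) (h.right_relation_mem hI hjjk hc)
  have hΔ := (h.redComul_leftBrk_kjkji hI hki).sub ((h.redComul_leftBrk_jkkji hI hki).smul c)
  have hcoef : (1 - ζ ^ 4) * q j k = c * (1 - ζ ^ 8) := by rw [← hc]; ring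
  rw [IsPrimitiveMod, map_sub, map_smul, ← SModEq.zero]
  refine hΔ.trans (SModEq.zero.2 ?_)
  convert add_mem hl ((mixedSub I).smul_mem (1 - ζ ^ 8) hr) using 1
  simp only [leftBrk_singleton, h.skewComm_self_eq_smul hc, h.rightFactor_relation hc,
    h.skewComm_rightFactor hc, hcoef, TensorProduct.add_tmul, TensorProduct.tmul_sub,
    TensorProduct.tmul_smul, ← TensorProduct.smul_tmul']
  module

lemma relation_mem (h : NinthRootBraiding q i j k ζ) (hAAH : AAHRankTwo)
    (hI : IsPreNicholsIdeal S I) (hGK : FinGK I) (hc : c * (1 + ζ ^ 4) = q j k) :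
    leftBrk q [k, j, k, j, i] - c • leftBrk q [j, k, k, j, i] ∈ I := by
  have hdeg : degW θ [j, k, k, j, i] = degW θ [k, j, k, j, i] :=
    degW_perm (.swap k j [k, j, i])
  have hd := sub_mem (leftBrk_mem_homogD (q := q) [k, j, k, j, i])
    (Submodule.smul_mem _ c (hdeg ▸ leftBrk_mem_homogD (q := q) [j, k, k, j, i]))
  refine mem_of_isPrimitiveMod (t := (6, 5, 5)) hAAH hI hGK h.prim k hd ?_
    (h.isPrimitiveMod_relation hI (h.leftBrk_ki_mem hAAH hI hGK) (h.leftBrk_jjk_mem hAAH hI hGK) hc)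
    (by decide) h.kk ?_ ?_ ?_
  · simp [sum_degW]
  · simp only [qsym_degW_δ, List.map_cons, List.map_nil, List.prod_cons, List.prod_nil, mul_one,
      h.qtil_kk, h.jk, h.ik]
    linear_combination ζ ^ 5 * h.prim.pow_eq_one
  · trans qtil q i j ^ 2 * qtil q j k ^ 4 * qtil q i k ^ 2 * ζ ^ 45
    · simp only [degW_cons, degW_nil, add_zero, qf_add_left, qf_add_right, qf_δ_δ, qtil, h.ii, h.jj,
        h.kk]
      ring
    · rw [h.ij, h.jk, h.ik]
      linear_combination ζ ^ 5 * (ζ ^ 63 + ζ ^ 54 + ζ ^ 45 + ζ ^ 36 + ζ ^ 27 + ζ ^ 18 + ζ ^ 9 + 1)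
        * h.prim.pow_eq_one
  · simp [sum_degW, Nat.ModEq]

end NinthRootBraiding

theorem statement_8_general (hAAH : AAHRankTwo) (hI : IsPreNicholsIdeal S I) (hGK : FinGK I)
    {i j k : Fin θ} (h1 : IsPrimitiveRoot (q i i : ℂ) 9) (h2 : (qtil q i j)⁻¹ = (q i i : ℂ))
    (h3 : (q j j : ℂ) = (q i i : ℂ) ^ 5) (h4 : (qtil q j k)⁻¹ = (q i i : ℂ) ^ 5)
    (h5 : qtil q i k = 1) (h6 : (q k k : ℂ) = (q i i : ℂ) ^ 6) :
    brk q (δ θ i + δ θ j + δ θ k + δ θ j) (δ θ k)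
        (brk q (δ θ i + δ θ j + δ θ k) (δ θ j) (xw q [i, j, k]) (gen θ j)) (gen θ k) -
      ((1 + qtil q j k)⁻¹ * (q j k : ℂ)) •
        brk q (δ θ i + δ θ j + δ θ k + δ θ k) (δ θ j)
          (brk q (δ θ i + δ θ j + δ θ k) (δ θ k) (xw q [i, j, k]) (gen θ k)) (gen θ j)
      ∈ I := by
  have h := NinthRootBraiding.of_inv h1 h2 h3 h4 h5 h6
  have hc : (1 + qtil q j k)⁻¹ * q j k * (1 + q i i ^ 4) = q j k := by
    rw [← h.jk, mul_comm, mul_inv_cancel_left₀ h.one_add_qtil_ne_zero]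
  have hx := hI.xw_smodEq_leftBrk (h.leftBrk_ki_mem hAAH hI hGK) j
  have hl := hI.brk_smodEq (δ θ i + δ θ j + δ θ k + δ θ j) (δ θ k)
    (hI.brk_smodEq (δ θ i + δ θ j + δ θ k) (δ θ j) hx (gen θ j)) (gen θ k)
  have hr := hI.brk_smodEq (δ θ i + δ θ j + δ θ k + δ θ k) (δ θ j)
    (hI.brk_smodEq (δ θ i + δ θ j + δ θ k) (δ θ k) hx (gen θ k)) (gen θ j)
  have hkji : degW θ [k, j, i] = δ θ i + δ θ j + δ θ k := by
    rw [degW_cons, degW_cons, degW_singleton, add_comm, add_comm (δ θ j)]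
  rw [brk_leftBrk (by simp) hkji, brk_leftBrk (by simp) (by rw [degW_cons, hkji, add_comm])]
    at hl hr
  rw [← SModEq.zero]
  exact (hl.sub (hr.smul _)).trans (SModEq.zero.2 (h.relation_mem hAAH hI hGK hc))

end NinthRootBraiding

/-- Lemma 3.4: if `q_{ii} = q̃_{ij}⁻¹ ∈ G₉'`,
`q_{jj} = q̃_{jk}⁻¹ = q_{ii}⁵`, `q̃_{ik} = 1` and `q_{kk} = q_{ii}⁶`, then
`[[x_{ijk},x_j]_c,x_k]_c = (1+q̃_{jk})⁻¹ q_{jk} [[x_{ijk},x_k]_c,x_j]_c`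
in every finite-GKdim pre-Nichols algebra of `q`. -/
theorem statement_8 (θ : ℕ) (q : Fin θ → Fin θ → ℂˣ) (S : BraidedStr θ q)
    (hconn : (dynkin q).Connected)
    (hfd : FiniteDimensional ℂ (TV θ ⧸ Jq S))
    (hAAH : AAH)
    (I : Submodule ℂ (TV θ)) (hI : IsPreNicholsIdeal S I) (hGK : FinGK I)
    (i j k : Fin θ) (hij : i ≠ j) (hik : i ≠ k) (hjk : j ≠ k)
    (h1 : IsPrimitiveRoot (q i i : ℂ) 9)
    (h2 : (qtil q i j)⁻¹ = (q i i : ℂ))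
    (h3 : (q j j : ℂ) = (q i i : ℂ) ^ 5)
    (h4 : (qtil q j k)⁻¹ = (q i i : ℂ) ^ 5)
    (h5 : qtil q i k = 1)
    (h6 : (q k k : ℂ) = (q i i : ℂ) ^ 6) :
    brk q (δ θ i + δ θ j + δ θ k + δ θ j) (δ θ k)
        (brk q (δ θ i + δ θ j + δ θ k) (δ θ j) (xw q [i, j, k]) (gen θ j)) (gen θ k) -
      ((1 + qtil q j k)⁻¹ * (q j k : ℂ)) •
        brk q (δ θ i + δ θ j + δ θ k + δ θ k) (δ θ j)
          (brk q (δ θ i + δ θ j + δ θ k) (δ θ k) (xw q [i, j, k]) (gen θ k)) (gen θ j)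
      ∈ I :=
  statement_8_general (fun p S' => hAAH 2 p S') hI hGK h1 h2 h3 h4 h5 h6

end PreNicholsPaper
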